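/- arXiv:1103.0414 — 3 statements merged into one kernel-verified Lean document; each statement's English description precedes it below -/
import Mathlib

section
/- Let H₁ and H₂ be bounded, self-adjoint linear operators on X, each satisfying ⟨H_i x, x⟩ ≥ c_i‖x‖² for some c_i > 0 (hence invertible), and let φ : X → ℝ ∪ {+∞} be proper, convex and lower semicontinuous. Let z₁, z₂ ∈ X, and suppose p₁ minimizes x ↦ φ(x) + ½⟨H₁(x − z₁), x − z₁⟩ over X and p₂ minimizes x ↦ φ(x) + ½⟨H₂(x − z₂), x − z₂⟩ over X. Then ‖p₁ − p₂‖ ≤ √(‖H₁‖‖H₁⁻¹‖) · ‖z₁ − z₂‖ + ‖H₁⁻¹‖ · ‖(H₁ − H₂)(z₂ − p₂)‖. -/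
open scoped RealInnerProductSpace
open ContinuousLinearMap


theorem aux_cs {X : Type*} [NormedAddCommGroup X] [InnerProductSpace ℝ X]
    (H : X →L[ℝ] X) (hsa : ∀ x y : X, ⟪H x, y⟫ = ⟪x, H y⟫)
    (hpos : ∀ x : X, 0 ≤ ⟪H x, x⟫) (x y : X) :
    ⟪H x, y⟫ ≤ Real.sqrt ⟪H x, x⟫ * Real.sqrt ⟪H y, y⟫ := by
  rw [← Real.sqrt_mul (hpos x)]
  apply Real.le_sqrt_of_sq_le
  have h : ∀ t : ℝ, 0 ≤ ⟪H x, x⟫ * (t * t) + (2 * ⟪H x, y⟫) * t + ⟪H y, y⟫ := by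
    intro t
    have h1 := hpos (t • x + y)
    have h2 : ⟪H y, x⟫ = ⟪H x, y⟫ := by rw [hsa, real_inner_comm]
    simp only [map_add, map_smul, inner_add_left, inner_add_right, real_inner_smul_left,
      real_inner_smul_right, h2] at h1
    linarith
  have := discrim_le_zero h
  unfold discrim at this
  nlinarith

theorem aux_var {X : Type*} [NormedAddCommGroup X] [InnerProductSpace ℝ X]
    (H : X →L[ℝ] X) (hsa : ∀ x y : X, ⟪H x, y⟫ = ⟪x, H y⟫)
    (φ : X → WithTop ℝ)
    (hconv : ∀ x y : X, ∀ a b : ℝ, 0 ≤ a → 0 ≤ b → a + b = 1 →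
      φ (a • x + b • y) ≤ (a : WithTop ℝ) * φ x + (b : WithTop ℝ) * φ y)
    (z p x : X)
    (hp : ∀ x : X, φ p + ((2⁻¹ * ⟪H (p - z), p - z⟫ : ℝ) : WithTop ℝ)
        ≤ φ x + ((2⁻¹ * ⟪H (x - z), x - z⟫ : ℝ) : WithTop ℝ))
    (u v : ℝ) (hu : φ p = u) (hv : φ x = v) :
    u - v ≤ ⟪H (p - z), x - p⟫ := by
  have key : ∀ t : ℝ, 0 < t → t ≤ 1 →
      u - v ≤ ⟪H (p - z), x - p⟫ + t * (2⁻¹ * ⟪H (x - p), x - p⟫) := by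
    intro t ht ht1
    have h1 := hp ((1 - t) • p + t • x)
    have h2 := hconv p x (1 - t) t (by linarith) ht.le (by ring)
    have h3 := h1.trans (add_le_add_left h2 _)
    rw [hu, hv] at h3
    have e : (1 - t) • p + t • x - z = (p - z) + t • (x - p) := by module
    rw [e] at h3
    have h4 : u + 2⁻¹ * ⟪H (p - z), p - z⟫ ≤ ((1 - t) * u + t * v) +
        2⁻¹ * ⟪H ((p - z) + t • (x - p)), (p - z) + t • (x - p)⟫ := by
      exact_mod_cast h3
    have h5 : ⟪H (x - p), p - z⟫ = ⟪H (p - z), x - p⟫ := by rw [hsa, real_inner_comm]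
    generalize x - p = d at *
    generalize p - z = w at *
    simp only [map_add, map_smul, inner_add_left, inner_add_right, real_inner_smul_left,
      real_inner_smul_right, h5] at h4
    refine le_of_mul_le_mul_left ?_ ht
    linarith
  have hc : Filter.Tendsto
      (fun t : ℝ => ⟪H (p - z), x - p⟫ + t * (2⁻¹ * ⟪H (x - p), x - p⟫))
      (nhdsWithin 0 (Set.Ioi 0)) (nhds (⟪H (p - z), x - p⟫)) := by
    have : Continuous
      (fun t : ℝ => ⟪H (p - z), x - p⟫ + t * (2⁻¹ * ⟪H (x - p), x - p⟫)) := by fun_prop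
    have h := (this.tendsto 0).mono_left (nhdsWithin_le_nhds (s := Set.Ioi 0))
    simpa using h
  refine ge_of_tendsto hc ?_
  filter_upwards [Ioc_mem_nhdsGT (zero_lt_one' ℝ)] with t ht
  exact key t ht.1 ht.2

theorem aux_fin {X : Type*} (φ : X → WithTop ℝ) (hproper : ∃ x, φ x ≠ ⊤) (p : X) (q : X → ℝ)
    (hp : ∀ x, φ p + (q p : WithTop ℝ) ≤ φ x + (q x : WithTop ℝ)) : ∃ u : ℝ, φ p = u := by
  obtain ⟨x, hx⟩ := hproper
  have h := hp x
  have h1 : φ x + (q x : WithTop ℝ) ≠ ⊤ := WithTop.add_ne_top.2 ⟨hx, WithTop.coe_ne_top⟩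
  have h2 := (WithTop.add_ne_top.1 (ne_top_of_le_ne_top h1 h)).1
  exact ⟨(φ p).untop h2, (WithTop.coe_untop _ _).symm⟩

/-- Joint dependence of the proximity operator on the point and on the metric:
if `p₁ = prox_φ^{H₁}(z₁)` and `p₂ = prox_φ^{H₂}(z₂)` for bounded self-adjoint coercive
operators `H₁, H₂`, then
`‖p₁ − p₂‖ ≤ √(‖H₁‖‖H₁⁻¹‖)·‖z₁ − z₂‖ + ‖H₁⁻¹‖·‖(H₁ − H₂)(z₂ − p₂)‖`. -/
theorem stmt_9 {X : Type*} [NormedAddCommGroup X] [InnerProductSpace ℝ X] [CompleteSpace X]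
    (H₁ H₂ : X →L[ℝ] X)
    (hH₁sa : ∀ x y : X, ⟪H₁ x, y⟫ = ⟪x, H₁ y⟫)
    (hH₂sa : ∀ x y : X, ⟪H₂ x, y⟫ = ⟪x, H₂ y⟫)
    (hH₁coer : ∃ c : ℝ, 0 < c ∧ ∀ x : X, c * ‖x‖ ^ 2 ≤ ⟪H₁ x, x⟫)
    (hH₂coer : ∃ c : ℝ, 0 < c ∧ ∀ x : X, c * ‖x‖ ^ 2 ≤ ⟪H₂ x, x⟫)
    (φ : X → WithTop ℝ)
    (hproper : ∃ x, φ x ≠ ⊤)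
    (hconv : ∀ x y : X, ∀ a b : ℝ, 0 ≤ a → 0 ≤ b → a + b = 1 →
      φ (a • x + b • y) ≤ (a : WithTop ℝ) * φ x + (b : WithTop ℝ) * φ y)
    (hlsc : LowerSemicontinuous φ)
    (z₁ z₂ p₁ p₂ : X)
    (hp₁ : ∀ x : X, φ p₁ + ((2⁻¹ * ⟪H₁ (p₁ - z₁), p₁ - z₁⟫ : ℝ) : WithTop ℝ)
        ≤ φ x + ((2⁻¹ * ⟪H₁ (x - z₁), x - z₁⟫ : ℝ) : WithTop ℝ))
    (hp₂ : ∀ x : X, φ p₂ + ((2⁻¹ * ⟪H₂ (p₂ - z₂), p₂ - z₂⟫ : ℝ) : WithTop ℝ)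
        ≤ φ x + ((2⁻¹ * ⟪H₂ (x - z₂), x - z₂⟫ : ℝ) : WithTop ℝ)) :
    ∀ H₁inv : X →L[ℝ] X, H₁inv ∘L H₁ = 1 → H₁ ∘L H₁inv = 1 →
      ‖p₁ - p₂‖ ≤ Real.sqrt (‖H₁‖ * ‖H₁inv‖) * ‖z₁ - z₂‖
        + ‖H₁inv‖ * ‖(H₁ - H₂) (z₂ - p₂)‖ := by
  intro K hKH hHK
  have hHK' : ∀ x, H₁ (K x) = x := fun x => by
    simpa using congrArg (fun f : X →L[ℝ] X => f x) hHK
  obtain ⟨c, hc, hcoer⟩ := hH₁coer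
  have hpos : ∀ x : X, 0 ≤ ⟪H₁ x, x⟫ := fun x => le_trans (by positivity) (hcoer x)
  obtain ⟨u, hu⟩ := aux_fin φ hproper p₁ (fun x => 2⁻¹ * ⟪H₁ (x - z₁), x - z₁⟫) hp₁
  obtain ⟨v, hv⟩ := aux_fin φ hproper p₂ (fun x => 2⁻¹ * ⟪H₂ (x - z₂), x - z₂⟫) hp₂
  have v1 := aux_var H₁ hH₁sa φ hconv z₁ p₁ p₂ hp₁ u v hu hv
  have v2 := aux_var H₂ hH₂sa φ hconv z₂ p₂ p₁ hp₂ v u hv hu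
  have cs := aux_cs H₁ hH₁sa hpos
  have hmain : ⟪H₁ (p₁ - p₂), p₁ - p₂⟫ ≤ ⟪H₁ (z₁ - z₂), p₁ - p₂⟫
      + ⟪(H₁ - H₂) (z₂ - p₂), p₁ - p₂⟫ := by
    have e : p₂ - p₁ = -(p₁ - p₂) := by abel
    rw [e, inner_neg_right] at v1
    have e2 : H₁ (p₁ - p₂) = H₁ (z₁ - z₂) + (H₁ - H₂) (z₂ - p₂)
        + H₁ (p₁ - z₁) - H₂ (p₂ - z₂) := by
      simp only [map_sub, sub_apply]
      abel
    rw [e2, inner_sub_left, inner_add_left, inner_add_left]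
    linarith
  generalize (H₁ - H₂) (z₂ - p₂) = r at *
  generalize p₁ - p₂ = d at *
  generalize z₁ - z₂ = w at *
  have hK : ∀ x, Real.sqrt ⟪H₁ (K x), K x⟫ ≤ Real.sqrt ‖K‖ * ‖x‖ := by
    intro x
    rw [hHK' x]
    apply Real.sqrt_le_iff.2 ⟨by positivity, ?_⟩
    rw [mul_pow, Real.sq_sqrt (norm_nonneg _)]
    have := real_inner_le_norm x (K x)
    nlinarith [K.le_opNorm x, norm_nonneg x]
  have hH : Real.sqrt ⟪H₁ w, w⟫ ≤ Real.sqrt ‖H₁‖ * ‖w‖ := by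
    apply Real.sqrt_le_iff.2 ⟨by positivity, ?_⟩
    rw [mul_pow, Real.sq_sqrt (norm_nonneg _)]
    have := real_inner_le_norm (H₁ w) w
    nlinarith [H₁.le_opNorm w, norm_nonneg w]
  have hd2 := Real.sq_sqrt (hpos d)
  have c1 := cs w d
  have c2 := cs (K r) d
  have c3 := cs (K d) d
  rw [hHK'] at c2 c3
  rw [real_inner_self_eq_norm_sq] at c3
  have k1 := hK r
  have k2 := hK d
  rw [hHK'] at k1 k2
  rw [Real.sqrt_mul (norm_nonneg _)]
  have hKs := Real.sq_sqrt (norm_nonneg K)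
  have nd := Real.sqrt_nonneg ⟪H₁ d, d⟫
  have nK := Real.sqrt_nonneg ‖K‖
  set D := Real.sqrt ⟪H₁ d, d⟫
  set k := Real.sqrt ‖K‖
  set h := Real.sqrt ‖H₁‖
  have b1 : D ≤ h * ‖w‖ + k * ‖r‖ := by
    have hle : D * D ≤ (h * ‖w‖ + k * ‖r‖) * D := by
      nlinarith [mul_le_mul_of_nonneg_right hH nd, mul_le_mul_of_nonneg_right k1 nd]
    rcases nd.eq_or_lt with h0 | h0
    · rw [← h0]; positivity
    · exact le_of_mul_le_mul_right hle h0
  have b2 : ‖d‖ ≤ k * D := by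
    have hle : ‖d‖ * ‖d‖ ≤ (k * D) * ‖d‖ := by
      nlinarith [mul_le_mul_of_nonneg_right k2 nd]
    rcases (norm_nonneg d).eq_or_lt with h0 | h0
    · rw [← h0]; positivity
    · exact le_of_mul_le_mul_right hle h0
  rw [← hKs]
  nlinarith [mul_le_mul_of_nonneg_left b1 nK]
end

section
/- Assume F : Ω → Y is Gâteaux differentiable, J : X → ℝ ∪ {+∞} is proper, convex and lower semicontinuous, x* ∈ Ω is a local minimizer of Φ₀(x) = ½‖F(x)‖² + J(x) with J(x*) < +∞ and F′(x*) injective with closed range, U ⊆ Ω is open and star-shaped with respect to x*, and F′ satisfies the center Lipschitz condition of center x* with L average on U, where L : [0,R) → ℝ is continuous, positive and increasing. Set α = ‖F(x*)‖, β = ‖F′(x*)†‖, κ = ‖F′(x*)†‖‖F′(x*)‖, and R̄ = sup{ r ∈ (0,R) : γ₀(r)·r < 1/β }. Then for any r with 0 < r ≤ R̄ and B_r(x*) ⊆ U, and any x ∈ B_r(x*): F′(x) is injective with closed range, and the unique minimizer p of z ↦ ½‖F(x) + F′(x)(z − x)‖² + J(z) over X satisfies ‖p − x*‖ ≤ q(‖x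 − x*‖)·‖x − x*‖, where q : [0,R̄) → ℝ₊ is defined by q(r) = β/(1 − βγ₀(r)r) · { (βγ₀(r)γ^c(r)r² + κγ^c(r)r)/(1 − βγ₀(r)r) + (1+√2)αβ²γ₀(r)²r/(1 − βγ₀(r)r) + ((1+√2)κ + 1)αβγ₀(r)/(1 − βγ₀(r)r) }; moreover q is continuous and strictly increasing. -/
open scoped ENNReal
open ContinuousLinearMap

lemma gam0_eq (L : ℝ → ℝ) (r : ℝ) :
    (if r = 0 then L 0 else (∫ u in (0:ℝ)..r, L u) / r) = ∫ s in (0:ℝ)..1, L (s * r) := by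
  split_ifs with h
  · subst h; simp
  · rw [intervalIntegral.integral_comp_mul_right L h]
    simp [div_eq_inv_mul]

lemma gamc_eq (L : ℝ → ℝ) (r : ℝ) :
    (if r = 0 then 3 * L 0 / 2 else (∫ u in (0:ℝ)..r, (2 * r - u) * L u) / r ^ 2)
      = ∫ s in (0:ℝ)..1, (2 - s) * L (s * r) := by
  split_ifs with h
  · subst h
    have : ∫ s in (0:ℝ)..1, (2 - s) = 3 / 2 := by
      rw [intervalIntegral.integral_sub (by simp) (by simp)]; norm_num
    simp only [mul_zero, intervalIntegral.integral_mul_const, this]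
    ring
  · have h1 := intervalIntegral.integral_comp_mul_right (a := 0) (b := 1)
      (fun u => (2 * r - u) * L u) h
    have h2 : ∫ s in (0:ℝ)..1, (2 * r - s * r) * L (s * r)
        = r * ∫ s in (0:ℝ)..1, (2 - s) * L (s * r) := by
      rw [← intervalIntegral.integral_const_mul]
      congr 1; ext s; ring
    simp only [zero_mul, one_mul, smul_eq_mul] at h1
    rw [h2] at h1
    field_simp at h1 ⊢
    linarith

lemma clamp_cont (L : ℝ → ℝ) (ρ : ℝ) (hρ : 0 ≤ ρ) (hL : ContinuousOn L (Set.Icc 0 ρ)) :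
    ∃ L' : ℝ → ℝ, Continuous L' ∧ ∀ u ∈ Set.Icc 0 ρ, L' u = L u :=
  ⟨Set.IccExtend hρ ((Set.Icc 0 ρ).domRestrict L), (continuousOn_iff_continuous_domRestrict.1 hL).Icc_extend',
    fun u hu => by rw [Set.IccExtend_of_mem hρ _ hu]; rfl⟩

lemma scal_mem {s r ρ : ℝ} (hs : s ∈ Set.Icc (0:ℝ) 1) (hr : r ∈ Set.Icc 0 ρ) :
    s * r ∈ Set.Icc 0 ρ :=
  ⟨mul_nonneg hs.1 hr.1, by nlinarith [hs.1, hs.2, hr.1, hr.2]⟩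

lemma par_contOn (L w : ℝ → ℝ) (hw : Continuous w) (ρ : ℝ) (hρ : 0 ≤ ρ)
    (hL : ContinuousOn L (Set.Icc 0 ρ)) :
    ContinuousOn (fun r => ∫ s in (0:ℝ)..1, w s * L (s * r)) (Set.Icc 0 ρ) := by
  obtain ⟨L', hc, he⟩ := clamp_cont L ρ hρ hL
  have : Continuous (fun r => ∫ s in (0:ℝ)..1, w s * L' (s * r)) := by
    apply intervalIntegral.continuous_parametric_intervalIntegral_of_continuous'
    fun_prop
  refine this.continuousOn.congr fun r hr => ?_
  apply intervalIntegral.integral_congr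
  intro s hs
  rw [Set.uIcc_of_le zero_le_one] at hs
  simp only [he _ (scal_mem hs hr)]

lemma par_integrable (L w : ℝ → ℝ) (hw : Continuous w) (ρ : ℝ)
    (hL : ContinuousOn L (Set.Icc 0 ρ)) (r : ℝ) (hr : r ∈ Set.Icc 0 ρ) :
    IntervalIntegrable (fun s => w s * L (s * r)) MeasureTheory.volume 0 1 := by
  apply ContinuousOn.intervalIntegrable
  rw [Set.uIcc_of_le zero_le_one]
  refine hw.continuousOn.mul (hL.comp (by fun_prop) fun s hs => scal_mem hs hr)

lemma par_mono (L w : ℝ → ℝ) (hw : Continuous w) (hw0 : ∀ s ∈ Set.Icc (0:ℝ) 1, 0 ≤ w s) (ρ : ℝ)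
    (hL : ContinuousOn L (Set.Icc 0 ρ)) (hm : MonotoneOn L (Set.Icc 0 ρ)) :
    MonotoneOn (fun r => ∫ s in (0:ℝ)..1, w s * L (s * r)) (Set.Icc 0 ρ) := by
  intro a ha b hb hab
  apply intervalIntegral.integral_mono_on zero_le_one (par_integrable L w hw ρ hL a ha)
    (par_integrable L w hw ρ hL b hb)
  intro s hs
  exact mul_le_mul_of_nonneg_left (hm (scal_mem hs ha) (scal_mem hs hb)
    (mul_le_mul_of_nonneg_left hab hs.1)) (hw0 s hs)

lemma par_pos (L w : ℝ → ℝ) (hw : Continuous w) (hw0 : ∀ s ∈ Set.Icc (0:ℝ) 1, 0 ≤ w s) 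
    (hwi : 0 < ∫ s in (0:ℝ)..1, w s) (ρ : ℝ)
    (hL : ContinuousOn L (Set.Icc 0 ρ)) (hm : MonotoneOn L (Set.Icc 0 ρ)) (h0 : 0 < L 0) 
    (r : ℝ) (hr : r ∈ Set.Icc 0 ρ) : 0 < ∫ s in (0:ℝ)..1, w s * L (s * r) := by
  have h := par_mono L w hw hw0 ρ hL hm (⟨le_rfl, hr.1.trans hr.2⟩ : (0:ℝ) ∈ Set.Icc 0 ρ) hr hr.1
  refine lt_of_lt_of_le ?_ h
  simp only [mul_zero, intervalIntegral.integral_mul_const]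
  positivity

/-- Taylor-type bound for Gateaux differentiable maps. -/
lemma taylor_bound {X Y : Type*} [NormedAddCommGroup X] [NormedSpace ℝ X]
    [NormedAddCommGroup Y] [NormedSpace ℝ Y]
    (F : X → Y) (F' : X → (X →L[ℝ] Y)) (xs x : X)
    (hd : ∀ t ∈ Set.Icc (0:ℝ) 1, HasDerivAt (fun t : ℝ => F (xs + t • (x - xs)))
      (F' (xs + t • (x - xs)) (x - xs)) t)
    (L : ℝ → ℝ) (hL : ContinuousOn L (Set.Icc 0 ‖x - xs‖))
    (hcen : ∀ t ∈ Set.Icc (0:ℝ) 1, ‖F' (xs + t • (x - xs)) - F' xs‖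
      ≤ ∫ u in (0:ℝ)..(t * ‖x - xs‖), L u) :
    ‖F x - F xs - F' x (x - xs)‖ ≤ ∫ u in (0:ℝ)..‖x - xs‖, (2 * ‖x - xs‖ - u) * L u := by
  set ρ := ‖x - xs‖ with hρ
  have hρ0 : 0 ≤ ρ := norm_nonneg _
  obtain ⟨K, hK, he⟩ := clamp_cont L ρ hρ0 hL
  have hint : ∀ t ∈ Set.Icc (0:ℝ) 1, ∫ u in (0:ℝ)..(t * ρ), L u = ∫ u in (0:ℝ)..(t * ρ), K u := by
    intro t ht
    apply intervalIntegral.integral_congr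
    intro u hu
    rw [Set.uIcc_of_le (mul_nonneg ht.1 hρ0)] at hu
    exact (he u ⟨hu.1, hu.2.trans (by nlinarith [ht.2])⟩).symm
  have hx1 : xs + (1:ℝ) • (x - xs) = x := by simp
  set M : ℝ → ℝ := fun t => ∫ u in (0:ℝ)..t, K u with hM
  set N : ℝ → ℝ := fun t => ∫ u in (0:ℝ)..t, u * K u with hN
  have hM' : ∀ t, HasDerivAt M (K t) t := fun t =>
    intervalIntegral.integral_hasDerivAt_right (hK.intervalIntegrable _ _)
      (hK.stronglyMeasurableAtFilter _ _) hK.continuousAt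
  have hK2 : Continuous fun u => u * K u := by fun_prop
  have hN' : ∀ t, HasDerivAt N (t * K t) t := fun t =>
    intervalIntegral.integral_hasDerivAt_right (hK2.intervalIntegrable _ _)
      (hK2.stronglyMeasurableAtFilter _ _) hK2.continuousAt
  set B : ℝ → ℝ := fun t => t * (ρ * M ρ) + t * ρ * M (t * ρ) - N (t * ρ) with hB
  have hB' : ∀ t, HasDerivAt B (ρ * M ρ + ρ * M (t * ρ)) t := by
    intro t
    have hm : HasDerivAt (fun t : ℝ => t * ρ) ρ t := by simpa using (hasDerivAt_id t).mul_const ρ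
    have h1 : HasDerivAt (fun t : ℝ => t * (ρ * M ρ)) (ρ * M ρ) t := by
      simpa using (hasDerivAt_id t).mul_const (ρ * M ρ)
    have h2 := hm.mul ((hM' (t * ρ)).comp t hm)
    have h3 := (hN' (t * ρ)).comp t hm
    refine ((h1.add h2).sub h3).congr_deriv ?_
    simp [Function.comp]; ring
  set g : ℝ → Y := fun t => F (xs + t • (x - xs)) - F xs - t • F' x (x - xs) with hg
  have hg' : ∀ t ∈ Set.Icc (0:ℝ) 1,
      HasDerivAt g (F' (xs + t • (x - xs)) (x - xs) - F' x (x - xs)) t := by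
    intro t ht
    have := ((hd t ht).sub_const (F xs)).sub ((hasDerivAt_id t).smul_const (F' x (x - xs)))
    rw [one_smul] at this
    exact this
  have key := image_norm_le_of_norm_deriv_right_le_deriv_boundary (f := g) (a := 0) (b := 1)
    (f' := fun t => F' (xs + t • (x - xs)) (x - xs) - F' x (x - xs))
    (B := B) (B' := fun t => ρ * M ρ + ρ * M (t * ρ))
    (fun t ht => (hg' t ht).continuousAt.continuousWithinAt)
    (fun t ht => (hg' t ⟨ht.1, ht.2.le⟩).hasDerivWithinAt) (by simp [hg, hB, hN]) hB'
    (fun t ht => by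
      have ht' : t ∈ Set.Icc (0:ℝ) 1 := ⟨ht.1, ht.2.le⟩
      have e1 := hcen t ht'
      have e2 := hcen 1 ⟨zero_le_one, le_rfl⟩
      rw [hint t ht'] at e1
      rw [hint 1 ⟨zero_le_one, le_rfl⟩, hx1, one_mul] at e2
      have : F' (xs + t • (x - xs)) (x - xs) - F' x (x - xs)
        = (F' (xs + t • (x - xs)) - F' xs) (x - xs) - (F' x - F' xs) (x - xs) := by simp
      rw [this]
      refine (norm_sub_le _ _).trans ?_
      have e3 := (F' (xs + t • (x - xs)) - F' xs).le_opNorm (x - xs)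
      have e4 := (F' x - F' xs).le_opNorm (x - xs)
      rw [← hρ] at e3 e4
      have e5 := mul_le_mul_of_nonneg_right e1 hρ0
      have e6 := mul_le_mul_of_nonneg_right e2 hρ0
      simp only [hM]
      linarith)
  have := key (⟨zero_le_one, le_rfl⟩ : (1:ℝ) ∈ Set.Icc (0:ℝ) 1)
  simp only [hg, hx1] at this
  rw [one_smul] at this
  refine this.trans (le_of_eq ?_)
  have : ∫ u in (0:ℝ)..ρ, (2 * ρ - u) * L u = ∫ u in (0:ℝ)..ρ, (2 * ρ * K u - u * K u) := by
    apply intervalIntegral.integral_congr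
    intro u hu
    rw [Set.uIcc_of_le hρ0] at hu
    simp only [he u hu]; ring
  rw [this, intervalIntegral.integral_sub ((by fun_prop : Continuous fun u => 2 * ρ * K u).intervalIntegrable _ _)
    (hK2.intervalIntegrable _ _), intervalIntegral.integral_const_mul]
  simp only [hB, hM, hN, one_mul]; ring

/-- Existence and uniqueness of the minimizer. -/
lemma exists_minimizer {X Y : Type*} [NormedAddCommGroup X] [InnerProductSpace ℝ X] [CompleteSpace X]
    [NormedAddCommGroup Y] [InnerProductSpace ℝ Y]
    (J : X → WithTop ℝ)
    (hconv : ∀ x y : X, ∀ a b : ℝ, 0 ≤ a → 0 ≤ b → a + b = 1 →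
      J (a • x + b • y) ≤ (a : WithTop ℝ) * J x + (b : WithTop ℝ) * J y)
    (hlsc : LowerSemicontinuous J) (x0 : X) (w0 : ℝ) (h0 : J x0 = w0)
    (l : X →L[ℝ] ℝ) (c : ℝ) (hl : ∀ z (w : ℝ), J z = w → c + l z ≤ w)
    (A : X →L[ℝ] Y) (b : Y) (s : ℝ) (hs : 0 < s) (hA : ∀ d, ‖d‖ ≤ s * ‖A d‖) :
    ∃ p, ∃ w : ℝ, J p = w ∧ (∀ z (v : ℝ), J z = v →
      2⁻¹ * ‖b + A p‖ ^ 2 + w ≤ 2⁻¹ * ‖b + A z‖ ^ 2 + v) ∧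
      (∀ p' (w' : ℝ), J p' = w' → (∀ z (v : ℝ), J z = v →
        2⁻¹ * ‖b + A p'‖ ^ 2 + w' ≤ 2⁻¹ * ‖b + A z‖ ^ 2 + v) → p' = p) := by
  set V : Set ℝ := {a | ∃ z, ∃ v : ℝ, J z = v ∧ a = 2⁻¹ * ‖b + A z‖ ^ 2 + v} with hV
  have hVne : V.Nonempty := ⟨_, x0, w0, h0, rfl⟩
  have hVb : BddBelow V := by
    refine ⟨c - ‖l‖ * s * ‖b‖ - (‖l‖ * s) ^ 2 / 2, ?_⟩
    rintro a ⟨z, v, hz, rfl⟩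
    have h1 := hl z v hz
    have h2 := neg_le_of_abs_le (l.le_opNorm z)
    have h3 := mul_le_mul_of_nonneg_left (hA z) (norm_nonneg l)
    have h4 : ‖A z‖ ≤ ‖b + A z‖ + ‖b‖ := by
      have := norm_sub_le (b + A z) b
      simpa using this
    have h5 := mul_le_mul_of_nonneg_left h4 (mul_nonneg (norm_nonneg l) hs.le)
    nlinarith [sq_nonneg (‖b + A z‖ - ‖l‖ * s)]
  set m := sInf V with hm
  -- midpoint inequality
  have hmid : ∀ z₁ z₂ (v₁ v₂ : ℝ), J z₁ = v₁ → J z₂ = v₂ →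
      m + 8⁻¹ * ‖A (z₁ - z₂)‖ ^ 2 ≤ 2⁻¹ * (2⁻¹ * ‖b + A z₁‖ ^ 2 + v₁)
        + 2⁻¹ * (2⁻¹ * ‖b + A z₂‖ ^ 2 + v₂) := by
    intro z₁ z₂ v₁ v₂ h₁ h₂
    have h := hconv z₁ z₂ 2⁻¹ 2⁻¹ (by norm_num) (by norm_num) (by norm_num)
    rw [h₁, h₂, ← WithTop.coe_mul, ← WithTop.coe_mul, ← WithTop.coe_add] at h
    obtain ⟨v, hv⟩ := WithTop.ne_top_iff_exists.1 (ne_top_of_le_ne_top WithTop.coe_ne_top h)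
    rw [← hv, WithTop.coe_le_coe] at h
    have h3 : m ≤ _ := csInf_le hVb ⟨_, v, hv.symm, rfl⟩
    have e1 : b + A ((2⁻¹:ℝ) • z₁ + (2⁻¹:ℝ) • z₂)
        = (2⁻¹:ℝ) • ((b + A z₁) + (b + A z₂)) := by
      simp only [map_add, map_smul]
      module
    have e2 : A (z₁ - z₂) = (b + A z₁) - (b + A z₂) := by simp
    have e3 := parallelogram_law_with_norm ℝ (b + A z₁) (b + A z₂)
    rw [e1, norm_smul] at h3
    rw [e2]
    norm_num at h3
    nlinarith
  have hseq : ∀ n : ℕ, ∃ z, ∃ v : ℝ, J z = v ∧ 2⁻¹ * ‖b + A z‖ ^ 2 + v < m + 1 / ((n:ℝ) + 1) := by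
    intro n
    obtain ⟨a, ⟨z, v, hz, rfl⟩, ha⟩ := exists_lt_of_csInf_lt hVne
      (show sInf V < m + 1 / ((n:ℝ) + 1) by rw [← hm]; have : 0 < 1 / ((n:ℝ) + 1) := by positivity
                                            linarith)
    exact ⟨z, v, hz, ha⟩
  choose z v hz hzv using hseq
  have hdist : ∀ n k N : ℕ, N ≤ n → N ≤ k → dist (z n) (z k) ≤ s * √(8 * (1 / ((N:ℝ) + 1))) := by
    intro n k N hn hk
    rw [dist_eq_norm]
    refine (hA _).trans (mul_le_mul_of_nonneg_left (Real.le_sqrt_of_sq_le ?_) hs.le)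
    have h1 := hmid _ _ _ _ (hz n) (hz k)
    have h2 := hzv n
    have h3 := hzv k
    have h4 : 1 / ((n:ℝ) + 1) ≤ 1 / ((N:ℝ) + 1) := by gcongr
    have h5 : 1 / ((k:ℝ) + 1) ≤ 1 / ((N:ℝ) + 1) := by gcongr
    nlinarith
  have hlim0 := tendsto_one_div_add_atTop_nhds_zero_nat (𝕜 := ℝ)
  have hcau : CauchySeq z := cauchySeq_of_le_tendsto_0 _ hdist (by
    have := ((hlim0.const_mul 8).sqrt).const_mul s
    simpa using this)
  obtain ⟨p, hp⟩ := cauchySeq_tendsto_of_complete hcau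
  have hJp : J p ≤ ((m - 2⁻¹ * ‖b + A p‖ ^ 2 : ℝ) : WithTop ℝ) := by
    by_contra hcon
    rw [not_le] at hcon
    obtain ⟨y, hy1, hy2⟩ := exists_between hcon
    obtain ⟨y, rfl⟩ := WithTop.ne_top_iff_exists.1 (ne_top_of_lt hy2)
    rw [WithTop.coe_lt_coe] at hy1
    have hev := hp.eventually (hlsc p _ hy2)
    have hle : y ≤ m + 0 - 2⁻¹ * ‖b + A p‖ ^ 2 := by
      have ht : Filter.Tendsto (fun n : ℕ => m + 1 / ((n:ℝ) + 1) - 2⁻¹ * ‖b + A (z n)‖ ^ 2)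
          Filter.atTop (nhds (m + 0 - 2⁻¹ * ‖b + A p‖ ^ 2)) :=
        (hlim0.const_add m).sub ((((A.continuous.tendsto p).comp hp).const_add b).norm.pow 2
          |>.const_mul 2⁻¹)
      refine ge_of_tendsto ht (hev.mono fun n hn => ?_)
      change (y : WithTop ℝ) < J (z n) at hn
      rw [hz n, WithTop.coe_lt_coe] at hn
      have := hzv n
      linarith
    linarith
  obtain ⟨w, hw⟩ := WithTop.ne_top_iff_exists.1 (ne_top_of_le_ne_top WithTop.coe_ne_top hJp)
  rw [← hw, WithTop.coe_le_coe] at hJp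
  refine ⟨p, w, hw.symm, fun z v hz => ?_, fun p' w' hp' hmin => ?_⟩
  · have : m ≤ _ := csInf_le hVb ⟨z, v, hz, rfl⟩
    linarith
  · have h1 := hmid _ _ _ _ hp' hw.symm
    have h2 := hmin p w hw.symm
    have h3 : ‖A (p' - p)‖ ^ 2 ≤ 0 := by nlinarith
    have h4 : ‖A (p' - p)‖ = 0 := by
      have := le_antisymm h3 (sq_nonneg _)
      simpa using this
    have h5 := hA (p' - p)
    rw [h4, mul_zero] at h5
    exact sub_eq_zero.1 (norm_le_zero_iff.1 h5)

/-- First-order optimality. -/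
lemma first_order {X Y : Type*} [NormedAddCommGroup X] [InnerProductSpace ℝ X]
    [NormedAddCommGroup Y] [InnerProductSpace ℝ Y]
    (J : X → WithTop ℝ)
    (hconv : ∀ x y : X, ∀ a b : ℝ, 0 ≤ a → 0 ≤ b → a + b = 1 →
      J (a • x + b • y) ≤ (a : WithTop ℝ) * J x + (b : WithTop ℝ) * J y)
    (G : X → Y) (x0 : X) (w0 : ℝ) (h0 : J x0 = w0)
    (hmin : ∀ᶠ x in nhds x0, ((2⁻¹ * ‖G x0‖ ^ 2 : ℝ) : WithTop ℝ) + J x0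
        ≤ ((2⁻¹ * ‖G x‖ ^ 2 : ℝ) : WithTop ℝ) + J x)
    (z : X) (v : ℝ) (hz : J z = v) (D : Y)
    (hd : HasDerivAt (fun t : ℝ => G (x0 + t • (z - x0))) D 0) :
    w0 - inner ℝ (G x0) D ≤ v := by
  have hn := (hd.norm_sq).const_mul (2⁻¹:ℝ)
  have hn2 : HasDerivAt (fun t : ℝ => 2⁻¹ * ‖G (x0 + t • (z - x0))‖ ^ 2 + t * (v - w0))
      (inner ℝ (G x0) D + (v - w0)) 0 := by
    refine (hn.add ((hasDerivAt_id (0:ℝ)).mul_const (v - w0))).congr_deriv ?_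
    simp
  have ht := hn2.tendsto_slope_zero_right
  have hcont : Filter.Tendsto (fun t : ℝ => x0 + t • (z - x0)) (nhdsWithin 0 (Set.Ioi 0)) (nhds x0) := by
    have : Continuous (fun t : ℝ => x0 + t • (z - x0)) := by fun_prop
    have h := this.tendsto 0
    simp only [zero_smul, add_zero] at h
    exact h.mono_left nhdsWithin_le_nhds
  have hfin : 0 ≤ inner ℝ (G x0) D + (v - w0) := by
    refine ge_of_tendsto ht ?_
    have hIoo : ∀ᶠ t : ℝ in nhdsWithin 0 (Set.Ioi 0), t ∈ Set.Ioo (0:ℝ) 1 :=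
      Ioo_mem_nhdsGT zero_lt_one
    filter_upwards [hcont.eventually hmin, hIoo] with t h1 ht
    have h2 := hconv x0 z (1 - t) t (by linarith [ht.2]) ht.1.le (by ring)
    have e : (1 - t) • x0 + t • z = x0 + t • (z - x0) := by module
    rw [e, h0, hz, ← WithTop.coe_mul, ← WithTop.coe_mul, ← WithTop.coe_add] at h2
    have h3 := h1.trans (add_le_add_right h2 _)
    rw [h0, ← WithTop.coe_add, ← WithTop.coe_add, WithTop.coe_le_coe] at h3
    simp only [zero_add, zero_smul, add_zero, zero_mul, smul_eq_mul]
    apply mul_nonneg (inv_nonneg.2 ht.1.le)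
    nlinarith
  linarith

set_option maxHeartbeats 2000000 in
/-- One-step contraction estimate for the proximal Gauss–Newton operator
(Proposition on the map `G̃`): under the standing hypotheses (F Gâteaux differentiable,
J proper convex lsc, x* a local minimizer of `Φ₀ = ½‖F·‖² + J` with `F′(x*)` injective
with closed range, `F′` center Lipschitz of center `x*` with continuous positive
increasing average `L` on the open star-shaped set `U`), with `α = ‖F(x*)‖`,
`β = ‖F′(x*)†‖`, `κ = β‖F′(x*)‖`, `R̄ = sup{r ∈ (0,R) : γ₀(r)r < 1/β}`: for every
`0 < r ≤ R̄` with `B_r(x*) ⊆ U` and every `x ∈ B_r(x*)`, the map `F′(x)` is injective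
with closed range and the unique minimizer `p` of `z ↦ ½‖F(x) + F′(x)(z − x)‖² + J(z)`
satisfies `‖p − x*‖ ≤ q(‖x − x*‖)‖x − x*‖`; moreover `q` is continuous and strictly
increasing on `[0,R̄)`. -/
theorem stmt_14 {X Y : Type*} [NormedAddCommGroup X] [InnerProductSpace ℝ X] [CompleteSpace X]
    [NormedAddCommGroup Y] [InnerProductSpace ℝ Y] [CompleteSpace Y]
    (Ω U : Set X) (hΩopen : IsOpen Ω) (hΩne : Ω.Nonempty)
    (hUopen : IsOpen U) (hUΩ : U ⊆ Ω)
    (F : X → Y) (F' : X → (X →L[ℝ] Y))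
    -- `F` is Gâteaux differentiable on `Ω` with derivative `F'`
    (hdiff : ∀ x ∈ Ω, ∀ v : X,
      Filter.Tendsto (fun t : ℝ => t⁻¹ • (F (x + t • v) - F x))
        (nhdsWithin (0:ℝ) {(0:ℝ)}ᶜ) (nhds (F' x v)))
    -- `J` is proper, convex and lower semicontinuous
    (J : X → WithTop ℝ)
    (hproper : ∃ x, J x ≠ ⊤)
    (hconv : ∀ x y : X, ∀ a b : ℝ, 0 ≤ a → 0 ≤ b → a + b = 1 →
      J (a • x + b • y) ≤ (a : WithTop ℝ) * J x + (b : WithTop ℝ) * J y)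
    (hlsc : LowerSemicontinuous J)
    -- `x* ∈ U` and `U` is star-shaped with respect to `x*`
    (xs : X) (hxsU : xs ∈ U)
    (hstar : ∀ x ∈ U, ∀ t ∈ Set.Icc (0:ℝ) 1, xs + t • (x - xs) ∈ U)
    -- `x*` is a local minimizer of `Φ₀ = ½‖F·‖² + J` with `J(x*) < +∞`
    (hxsJ : J xs ≠ ⊤)
    (hmin : ∀ᶠ x in nhds xs,
      ((2⁻¹ * ‖F xs‖ ^ 2 : ℝ) : WithTop ℝ) + J xs
        ≤ ((2⁻¹ * ‖F x‖ ^ 2 : ℝ) : WithTop ℝ) + J x)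
    -- `F′(x*)` is injective with closed range, `S = (F′(x*)*F′(x*))⁻¹`
    (hinj : Function.Injective (F' xs)) (hcl : IsClosed (Set.range (F' xs)))
    (S : X →L[ℝ] X)
    (hS1 : S ∘L (adjoint (F' xs) ∘L F' xs) = 1)
    (hS2 : (adjoint (F' xs) ∘L F' xs) ∘L S = 1)
    -- `L : [0,R) → ℝ` is continuous, positive and increasing, `sup_{x∈U}‖x−x*‖ ≤ R`
    (R : ℝ≥0∞) (hR : 0 < R) (hsup : ∀ x ∈ U, (‖x - xs‖₊ : ℝ≥0∞) ≤ R)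
    (L : ℝ → ℝ)
    (hLcont : ContinuousOn L {u : ℝ | 0 ≤ u ∧ ENNReal.ofReal u < R})
    (hLpos : ∀ u : ℝ, 0 ≤ u → ENNReal.ofReal u < R → 0 < L u)
    (hLmono : ∀ u v : ℝ, 0 ≤ u → u ≤ v → ENNReal.ofReal v < R → L u ≤ L v)
    -- `F′` is center Lipschitz of center `x*` with `L` average on `U`
    (hcen : ∀ x ∈ U, ‖F' x - F' xs‖ ≤ ∫ u in (0:ℝ)..‖x - xs‖, L u)
    -- the constants `α`, `β`, `κ`
    (α β κ : ℝ)
    (hα : α = ‖F xs‖) (hβ : β = ‖S ∘L adjoint (F' xs)‖) (hκ : κ = β * ‖F' xs‖)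
    -- the functions `γ₀`, `γ^c` and `q`, and the radius `R̄`
    (γ₀ γc : ℝ → ℝ)
    (hγ₀ : ∀ r : ℝ, γ₀ r = if r = 0 then L 0 else (∫ u in (0:ℝ)..r, L u) / r)
    (hγc : ∀ r : ℝ, γc r = if r = 0 then 3 * L 0 / 2
        else (∫ u in (0:ℝ)..r, (2 * r - u) * L u) / r ^ 2)
    (Rb : ℝ≥0∞)
    (hRb : Rb = sSup {ρ : ℝ≥0∞ | 0 < ρ ∧ ρ < R ∧ γ₀ ρ.toReal * ρ.toReal < 1 / β})
    (q : ℝ → ℝ)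
    (hq : ∀ r : ℝ, q r = β / (1 - β * γ₀ r * r) *
        ((β * γ₀ r * γc r * r ^ 2 + κ * γc r * r) / (1 - β * γ₀ r * r)
          + (1 + Real.sqrt 2) * α * β ^ 2 * γ₀ r ^ 2 * r / (1 - β * γ₀ r * r)
          + ((1 + Real.sqrt 2) * κ + 1) * α * β * γ₀ r / (1 - β * γ₀ r * r))) :
    (∀ r : ℝ, 0 < r → ENNReal.ofReal r ≤ Rb → Metric.ball xs r ⊆ U →
      ∀ x ∈ Metric.ball xs r,
        Function.Injective (F' x) ∧ IsClosed (Set.range (F' x)) ∧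
        ∃ p : X,
          (∀ z : X,
            ((2⁻¹ * ‖F x + (F' x) (p - x)‖ ^ 2 : ℝ) : WithTop ℝ) + J p
              ≤ ((2⁻¹ * ‖F x + (F' x) (z - x)‖ ^ 2 : ℝ) : WithTop ℝ) + J z) ∧
          (∀ p' : X,
            (∀ z : X,
              ((2⁻¹ * ‖F x + (F' x) (p' - x)‖ ^ 2 : ℝ) : WithTop ℝ) + J p'
                ≤ ((2⁻¹ * ‖F x + (F' x) (z - x)‖ ^ 2 : ℝ) : WithTop ℝ) + J z) →
            p' = p) ∧
          ‖p - xs‖ ≤ q ‖x - xs‖ * ‖x - xs‖) ∧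
    ContinuousOn q {u : ℝ | 0 ≤ u ∧ ENNReal.ofReal u < Rb} ∧
    StrictMonoOn q {u : ℝ | 0 ≤ u ∧ ENNReal.ofReal u < Rb} := by
  have hγ₀' : ∀ r, γ₀ r = ∫ s in (0:ℝ)..1, (1:ℝ) * L (s * r) := fun r => by
    rw [hγ₀, gam0_eq]; simp
  have hγc' : ∀ r, γc r = ∫ s in (0:ℝ)..1, (2 - s) * L (s * r) := fun r => by
    rw [hγc, gamc_eq]
  have hγ₀i : ∀ r, γ₀ r * r = ∫ u in (0:ℝ)..r, L u := fun r => by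
    rw [hγ₀]
    split_ifs with h
    · subst h; simp
    · field_simp
  have hLc : ∀ ρ : ℝ, ENNReal.ofReal ρ < R → ContinuousOn L (Set.Icc 0 ρ) := fun ρ h =>
    hLcont.mono fun u hu => ⟨hu.1, (ENNReal.ofReal_le_ofReal hu.2).trans_lt h⟩
  have hLm : ∀ ρ : ℝ, ENNReal.ofReal ρ < R → MonotoneOn L (Set.Icc 0 ρ) := fun ρ h a ha b hb hab =>
    hLmono a b ha.1 hab ((ENNReal.ofReal_le_ofReal hb.2).trans_lt h)
  have hL0 : 0 < L 0 := hLpos 0 le_rfl (by simpa using hR)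
  have hw0 : ∀ s ∈ Set.Icc (0:ℝ) 1, (0:ℝ) ≤ 1 := fun _ _ => zero_le_one
  have hw2 : ∀ s ∈ Set.Icc (0:ℝ) 1, 0 ≤ 2 - s := fun s hs => by linarith [hs.2]
  have hw0i : 0 < ∫ s in (0:ℝ)..1, (1:ℝ) := by simp
  have hw2i : 0 < ∫ s in (0:ℝ)..1, (2 - s) := by
    rw [intervalIntegral.integral_sub (by simp) (by simp)]; norm_num
  have hg0m : ∀ ρ : ℝ, ENNReal.ofReal ρ < R → MonotoneOn γ₀ (Set.Icc 0 ρ) := fun ρ h => by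
    rw [funext hγ₀']
    exact par_mono L (fun _ => 1) continuous_const hw0 ρ (hLc ρ h) (hLm ρ h)
  have hgcm : ∀ ρ : ℝ, ENNReal.ofReal ρ < R → MonotoneOn γc (Set.Icc 0 ρ) := fun ρ h => by
    rw [funext hγc']
    exact par_mono L (fun s => 2 - s) (by fun_prop) hw2 ρ (hLc ρ h) (hLm ρ h)
  have hg0c : ∀ ρ : ℝ, 0 ≤ ρ → ENNReal.ofReal ρ < R → ContinuousOn γ₀ (Set.Icc 0 ρ) :=
    fun ρ h0 h => by
      rw [funext hγ₀']
      exact par_contOn L (fun _ => 1) continuous_const ρ h0 (hLc ρ h)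
  have hgcc : ∀ ρ : ℝ, 0 ≤ ρ → ENNReal.ofReal ρ < R → ContinuousOn γc (Set.Icc 0 ρ) :=
    fun ρ h0 h => by
      rw [funext hγc']
      exact par_contOn L (fun s => 2 - s) (by fun_prop) ρ h0 (hLc ρ h)
  have hg0p : ∀ r : ℝ, 0 ≤ r → ENNReal.ofReal r < R → 0 < γ₀ r := fun r h0 h => by
    rw [hγ₀']
    exact par_pos L (fun _ => 1) continuous_const hw0 hw0i r (hLc r h) (hLm r h) hL0 r ⟨h0, le_rfl⟩
  have hgcp : ∀ r : ℝ, 0 ≤ r → ENNReal.ofReal r < R → 0 < γc r := fun r h0 h => by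
    rw [hγc']
    exact par_pos L (fun s => 2 - s) (by fun_prop) hw2 hw2i r (hLc r h) (hLm r h) hL0 r ⟨h0, le_rfl⟩
  have hα0 : 0 ≤ α := hα ▸ norm_nonneg _
  -- points below `Rb`
  have hlt : ∀ u : ℝ, 0 ≤ u → ENNReal.ofReal u < Rb →
      ∃ ρ : ℝ, u < ρ ∧ ENNReal.ofReal ρ < R ∧ γ₀ ρ * ρ < 1 / β := by
    intro u hu h
    rw [hRb, lt_sSup_iff] at h
    obtain ⟨ρ, ⟨hρ0, hρR, hρ⟩, hur⟩ := h
    have hne : ρ ≠ ⊤ := ne_top_of_lt hρR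
    refine ⟨ρ.toReal, ?_, by rwa [ENNReal.ofReal_toReal hne], hρ⟩
    exact (ENNReal.ofReal_lt_iff_lt_toReal hu hne).1 hur
  have hpseudo : ∀ d, ‖d‖ ≤ β * ‖F' xs d‖ := fun d => by
    have h1 := (S ∘L adjoint (F' xs)).le_opNorm (F' xs d)
    rw [← hβ] at h1
    have h2 : (S ∘L adjoint (F' xs)) (F' xs d) = d := by
      have := congrArg (fun T : X →L[ℝ] X => T d) hS1
      simpa using this
    rwa [h2] at h1
  have hβ0 : 0 ≤ β := hβ ▸ norm_nonneg _
  have hβpos : ∀ u : ℝ, 0 ≤ u → ENNReal.ofReal u < Rb → 0 < β := fun u hu h => by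
    obtain ⟨ρ, h1, h2, h3⟩ := hlt u hu h
    have h4 := mul_pos (hg0p ρ (hu.trans h1.le) h2) (hu.trans_lt h1)
    rcases hβ0.eq_or_lt with h5 | h5
    · rw [← h5] at h3; simp at h3; linarith
    · exact h5
  have hκ1 : 0 < β → 1 ≤ κ := fun hb => by
    have hne : ∃ v : X, v ≠ 0 := by
      by_contra hcon
      push Not at hcon
      have : S ∘L adjoint (F' xs) = 0 := by ext y; rw [hcon ((S ∘L adjoint (F' xs)) y)]; rfl
      rw [hβ, this, norm_zero] at hb
      exact lt_irrefl _ hb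
    obtain ⟨v, hv⟩ := hne
    have h1 := hpseudo v
    have h2 := mul_le_mul_of_nonneg_left ((F' xs).le_opNorm v) hβ0
    have h3 := norm_pos_iff.2 hv
    rw [hκ]
    by_contra hcon
    push Not at hcon
    nlinarith
  have hDpos : ∀ ρ : ℝ, 0 < β → ENNReal.ofReal ρ < R → γ₀ ρ * ρ < 1 / β →
      ∀ r ∈ Set.Icc 0 ρ, 0 < 1 - β * γ₀ r * r := by
    intro ρ hb hρR hρ r hr
    have h0 : (0:ℝ) ≤ ρ := hr.1.trans hr.2
    have h1 : γ₀ r ≤ γ₀ ρ := hg0m ρ hρR hr ⟨h0, le_rfl⟩ hr.2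
    have h2 : γ₀ r * r ≤ γ₀ ρ * ρ := mul_le_mul h1 hr.2 hr.1 (hg0p ρ h0 hρR).le
    rw [lt_div_iff₀ hb] at hρ
    nlinarith
  have hs2 : 0 ≤ Real.sqrt 2 := Real.sqrt_nonneg 2
  refine ⟨?_, ?_, ?_⟩
  · intro r hr0 hrRb hrU x hx
    have hxU : x ∈ U := hrU hx
    set e := x - xs with he
    have hρr : ‖e‖ < r := by rwa [Metric.mem_ball, dist_eq_norm] at hx
    have hρ0 : 0 ≤ ‖e‖ := norm_nonneg _
    have hρRb : ENNReal.ofReal ‖e‖ < Rb := ((ENNReal.ofReal_lt_ofReal_iff hr0).2 hρr).trans_le hrRb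
    have hb := hβpos _ hρ0 hρRb
    have hk := hκ1 hb
    obtain ⟨ρ', h1, h2, h3⟩ := hlt _ hρ0 hρRb
    have hmem : ‖e‖ ∈ Set.Icc 0 ρ' := ⟨hρ0, h1.le⟩
    have hD := hDpos ρ' hb h2 h3 _ hmem
    have hρR : ENNReal.ofReal ‖e‖ < R := (ENNReal.ofReal_le_ofReal h1.le).trans_lt h2
    have hg0 := hg0p _ hρ0 hρR
    have hgc := hgcp _ hρ0 hρR
    set g := γ₀ ‖e‖ with hg
    set c := γc ‖e‖ with hc
    set D := 1 - β * g * ‖e‖ with hDdef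
    set s := β / D with hs
    have hspos : 0 < s := div_pos hb hD
    have hdiffA : ∀ d, ‖(F' x - F' xs) d‖ ≤ g * ‖e‖ * ‖d‖ := fun d => by
      refine ((F' x - F' xs).le_opNorm d).trans (mul_le_mul_of_nonneg_right ?_ (norm_nonneg _))
      rw [hγ₀i]; exact hcen x hxU
    have hA : ∀ d, ‖d‖ ≤ s * ‖F' x d‖ := fun d => by
      have a1 := hpseudo d
      have a2 : ‖F' xs d‖ ≤ ‖F' x d‖ + g * ‖e‖ * ‖d‖ := by
        have := norm_sub_le (F' x d) ((F' x - F' xs) d)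
        have e1 : F' x d - (F' x - F' xs) d = F' xs d := by simp
        rw [e1] at this
        linarith [hdiffA d]
      have a3 := mul_le_mul_of_nonneg_left a2 hβ0
      rw [hs, div_mul_eq_mul_div, le_div_iff₀ hD, hDdef]
      nlinarith
    have hanti : AntilipschitzWith (⟨s, hspos.le⟩ : NNReal) (F' x) :=
      (F' x).antilipschitz_of_bound hA
    refine ⟨hanti.injective, hanti.isClosed_range (F' x).uniformContinuous, ?_⟩
    obtain ⟨w0, hw0J⟩ := WithTop.ne_top_iff_exists.1 hxsJ
    have hgat : ∀ y ∈ Ω, ∀ v, HasDerivAt (fun t : ℝ => F (y + t • v)) (F' y v) 0 := by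
      intro y hy v
      rw [hasDerivAt_iff_tendsto_slope_zero]
      simpa using hdiff y hy v
    have hopt : ∀ z (v : ℝ), J z = v → w0 - inner ℝ (F xs) (F' xs (z - xs)) ≤ v := fun z v hz =>
      first_order J hconv F xs w0 hw0J.symm hmin z v hz _ (hgat xs (hUΩ hxsU) _)
    obtain ⟨p, w, hpw, hpmin, hpuniq⟩ := exists_minimizer J hconv hlsc xs w0 hw0J.symm
      (-((innerSL ℝ (F xs)) ∘L F' xs)) (w0 + inner ℝ (F xs) (F' xs xs))
      (fun z v hz => by
        have := hopt z v hz
        rw [map_sub, inner_sub_right] at this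
        simp only [neg_apply, comp_apply, innerSL_apply_apply]
        linarith)
      (F' x) (F x - F' x x) s hspos hA
    have hre : ∀ z, F x - F' x x + F' x z = F x + F' x (z - x) := fun z => by
      rw [map_sub]; abel
    simp only [hre] at hpmin hpuniq
    have hpmin' : ∀ z : X, ((2⁻¹ * ‖F x + (F' x) (p - x)‖ ^ 2 : ℝ) : WithTop ℝ) + J p
              ≤ ((2⁻¹ * ‖F x + (F' x) (z - x)‖ ^ 2 : ℝ) : WithTop ℝ) + J z := by
      intro z
      by_cases hz : J z = ⊤
      · rw [hz]; simp
      · obtain ⟨v, hv⟩ := WithTop.ne_top_iff_exists.1 hz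
        rw [hpw, ← hv, ← WithTop.coe_add, ← WithTop.coe_add, WithTop.coe_le_coe]
        exact hpmin z v hv.symm
    refine ⟨p, hpmin', ?_, ?_⟩
    · intro p' hp'
      have hfin : J p' ≠ ⊤ := by
        intro htop
        have := hp' p
        rw [htop, hpw, ← WithTop.coe_add, WithTop.add_top, top_le_iff] at this
        exact WithTop.coe_ne_top this
      obtain ⟨w', hw'⟩ := WithTop.ne_top_iff_exists.1 hfin
      refine hpuniq p' w' hw'.symm fun z v hz => ?_
      have := hp' z
      rwa [hz, ← hw', ← WithTop.coe_add, ← WithTop.coe_add, WithTop.coe_le_coe] at this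
    · -- the estimate
      have o1 := hopt p w hpw
      have o2 := first_order J hconv (fun z => F x + F' x (z - x)) p w hpw
        (Filter.Eventually.of_forall hpmin') xs w0 hw0J.symm (F' x (xs - p)) (by
          have h1 : HasDerivAt (fun t : ℝ => F x + F' x (p - x) + t • F' x (xs - p))
              (F' x (xs - p)) 0 := by
            have := ((hasDerivAt_id (0:ℝ)).smul_const (F' x (xs - p))).const_add
              (F x + F' x (p - x))
            rw [one_smul] at this
            exact this
          convert h1 using 2 with t
          simp only [map_sub, map_add, map_smul]
          abel)
      have htay : ‖F x - F xs - F' x e‖ ≤ c * ‖e‖ ^ 2 := by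
        have := taylor_bound F F' xs x (fun t ht => by
            have hm := hUΩ (hstar x hxU t ht)
            have h := hgat _ hm (x - xs)
            have h' : HasDerivAt (fun t' : ℝ => F (xs + t • (x - xs) + t' • (x - xs)))
              (F' (xs + t • (x - xs)) (x - xs)) (t - t) := by rwa [sub_self]
            have h4 := HasDerivAt.comp_sub_const t t h'
            convert h4 using 2 with t'
            congr 1
            module) L (hLc _ hρR) (fun t ht => by
            have := hcen _ (hstar x hxU t ht)
            rwa [add_sub_cancel_left, norm_smul, Real.norm_of_nonneg ht.1] at this)
        refine this.trans (le_of_eq ?_)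
        rw [hc, hγc]
        split_ifs with h
        · rw [← he, h]; simp
        · rw [← he]; field_simp
      set d := p - xs with hd
      have hneg : xs - p = -d := by rw [hd]; abel
      have hpx : p - x = d - e := by rw [hd, he]; abel
      rw [hneg, hpx] at o2
      have key : ‖F' x d‖ ^ 2 ≤ - inner ℝ (F xs) ((F' x - F' xs) d)
          - inner ℝ (F x - F xs - F' x e) (F' x d) := by
        simp only [map_sub, map_neg, inner_neg_right, inner_add_left, inner_sub_left,
          sub_apply, inner_sub_right] at o1 o2 ⊢
        rw [real_inner_self_eq_norm_sq] at o2
        linarith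
      have k1 := neg_le_of_abs_le (abs_real_inner_le_norm (F xs) ((F' x - F' xs) d))
      have k2 := neg_le_of_abs_le (abs_real_inner_le_norm (F x - F xs - F' x e) (F' x d))
      rw [← hα] at k1
      have k3 := mul_le_mul_of_nonneg_left (hdiffA d) hα0
      have k4 := mul_le_mul_of_nonneg_right htay (norm_nonneg (F' x d))
      have k5 := mul_le_mul_of_nonneg_left (hA d) (by positivity : 0 ≤ α * (g * ‖e‖))
      have k6 : ‖F' x d‖ * ‖F' x d‖ ≤ (α * (g * ‖e‖) * s + c * ‖e‖ ^ 2) * ‖F' x d‖ := by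
        nlinarith
      have k7 : ‖F' x d‖ ≤ α * (g * ‖e‖) * s + c * ‖e‖ ^ 2 := by
        rcases (norm_nonneg (F' x d)).eq_or_lt with h | h
        · rw [← h]; positivity
        · exact le_of_mul_le_mul_right k6 h
      have k8 : ‖d‖ ≤ s * (α * g * s + c * ‖e‖) * ‖e‖ := by
        refine (hA d).trans ((mul_le_mul_of_nonneg_left k7 hspos.le).trans (le_of_eq (by ring)))
      refine k8.trans (mul_le_mul_of_nonneg_right ?_ hρ0)
      rw [hq, ← hg, ← hc, ← hDdef, ← hs]
      refine mul_le_mul_of_nonneg_left ?_ hspos.le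
      have hD1 : D ≤ 1 := by
        have : 0 ≤ β * g * ‖e‖ := by positivity
        rw [hDdef]; linarith
      have m1 : c * ‖e‖ ≤ (β * g * c * ‖e‖ ^ 2 + κ * c * ‖e‖) / D := by
        rw [le_div_iff₀ hD]
        have a1 : 0 ≤ c * ‖e‖ := by positivity
        have a2 : 0 ≤ β * g * c * ‖e‖ ^ 2 := by positivity
        nlinarith
      have m2 : 0 ≤ (1 + Real.sqrt 2) * α * β ^ 2 * g ^ 2 * ‖e‖ / D := by positivity
      have m3 : α * g * s ≤ ((1 + Real.sqrt 2) * κ + 1) * α * β * g / D := by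
        rw [hs, ← mul_div_assoc]
        apply div_le_div_of_nonneg_right _ hD.le
        have : 0 ≤ (1 + Real.sqrt 2) * κ * (α * β * g) := by
          have : 0 ≤ κ := by linarith
          positivity
        nlinarith
      linarith
  · intro u hu
    obtain ⟨ρ, h1, h2, h3⟩ := hlt u hu.1 hu.2
    have hb := hβpos u hu.1 hu.2
    have h0 : 0 ≤ ρ := hu.1.trans h1.le
    have hcq : ContinuousOn q (Set.Icc 0 ρ) := by
      rw [funext hq]
      have c0 := hg0c ρ h0 h2
      have cc := hgcc ρ h0 h2
      have hne : ∀ r ∈ Set.Icc 0 ρ, 1 - β * γ₀ r * r ≠ 0 :=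
        fun r hr => (hDpos ρ hb h2 h3 r hr).ne'
      fun_prop (disch := assumption)
    have : ContinuousWithinAt q (Set.Ici 0) u :=
      (hcq u ⟨hu.1, h1.le⟩).mono_of_mem_nhdsWithin (by
        filter_upwards [self_mem_nhdsWithin, nhdsWithin_le_nhds (Iio_mem_nhds h1)] with t ht ht'
        exact ⟨ht, le_of_lt ht'⟩)
    exact this.mono fun t ht => ht.1
  · intro a ha b hb' hab
    obtain ⟨ρ, h1, h2, h3⟩ := hlt b hb'.1 hb'.2
    have hb := hβpos b hb'.1 hb'.2
    have hk := hκ1 hb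
    have hma : a ∈ Set.Icc 0 ρ := ⟨ha.1, (hab.trans h1).le⟩
    have hmb : b ∈ Set.Icc 0 ρ := ⟨hb'.1, h1.le⟩
    have hRof : ∀ t ∈ Set.Icc 0 ρ, ENNReal.ofReal t < R := fun t ht =>
      (ENNReal.ofReal_le_ofReal ht.2).trans_lt h2
    have g0 := hg0m ρ h2 hma hmb hab.le
    have gc := hgcm ρ h2 hma hmb hab.le
    have ga := hg0p a ha.1 (hRof a hma)
    have gca := hgcp a ha.1 (hRof a hma)
    have gb := hg0p b hb'.1 (hRof b hmb)
    have gcb := hgcp b hb'.1 (hRof b hmb)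
    have Db := hDpos ρ hb h2 h3 b hmb
    have a0 : 0 ≤ a := ha.1
    have b0 : 0 ≤ b := hb'.1
    have hκ0 : 0 < κ := by linarith
    have hDD : 1 - β * γ₀ b * b ≤ 1 - β * γ₀ a * a := by
      have : β * γ₀ a * a ≤ β * γ₀ b * b := by gcongr
      linarith
    have hform : ∀ r, q r = β * (β * γ₀ r * γc r * r ^ 2 + κ * γc r * r
        + (1 + Real.sqrt 2) * α * β ^ 2 * γ₀ r ^ 2 * r
        + ((1 + Real.sqrt 2) * κ + 1) * α * β * γ₀ r) / (1 - β * γ₀ r * r) ^ 2 := by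
      intro r
      rw [hq, ← add_div, ← add_div, div_mul_div_comm, sq (1 - β * γ₀ r * r)]
    rw [hform a, hform b]
    have n1 : β * γ₀ a * γc a * a ^ 2 ≤ β * γ₀ b * γc b * b ^ 2 := by gcongr
    have n2 : κ * γc a * a < κ * γc b * b := by
      calc κ * γc a * a ≤ κ * γc b * a := by gcongr
        _ < κ * γc b * b := by gcongr
    have n3 : (1 + Real.sqrt 2) * α * β ^ 2 * γ₀ a ^ 2 * a
        ≤ (1 + Real.sqrt 2) * α * β ^ 2 * γ₀ b ^ 2 * b := by gcongr
    have n4 : ((1 + Real.sqrt 2) * κ + 1) * α * β * γ₀ a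
        ≤ ((1 + Real.sqrt 2) * κ + 1) * α * β * γ₀ b := by gcongr
    apply div_lt_div₀
    · apply mul_lt_mul_of_pos_left _ hb
      linarith
    · gcongr
    · positivity
    · positivity
end

section
/- Assume the hypotheses of the local convergence theorem for the proximal Gauss–Newton method, with F′ satisfying the RADIUS Lipschitz condition of center x* with CONSTANT average L on U, and h := ((1+√2)κ + 1)·αβ²L < 1. Define q : [0, 1/(βL)) → ℝ₊ by q(r) = β/(1 − βLr) · { (βL²r² + κLr)/(2(1 − βLr)) + (1+√2)αβ²L²r/(1 − βLr) + ((1+√2)κ + 1)αβL/(1 − βLr) }; then q is continuous and strictly increasing, and for r̄ := (1/(βL))·[ (2 + κ/2 + (1+√2)αβ²L) − √( (2 + κ/2 + (1+√2)αβ²L)² − 2(1 − h) ) ] and any r with 0 < r ≤ r̄ and B_r(x*) ⊆ U, and any x₀ ∈ B_r(x*), the proximal Gauss–Newton sequence (x_{n+1} the unique minimizer of z ↦ ½‖F(x_n) + F′(x_n)(z − x_n)‖² + J(z)) is well-defined, stays in B_r(x*), and satisfies ‖x_n − x*‖ ≤ q(‖x₀ − x*‖)ⁿ ‖x₀ − x*‖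 with q(‖x₀ − x*‖) < 1. -/
open scoped ENNReal
open ContinuousLinearMap

theorem pgn_conv {X : Type*} [NormedAddCommGroup X] [InnerProductSpace ℝ X]
    (J : X → WithTop ℝ)
    (hconv : ∀ x y : X, ∀ a b : ℝ, 0 ≤ a → 0 ≤ b → a + b = 1 →
      J (a • x + b • y) ≤ (a : WithTop ℝ) * J x + (b : WithTop ℝ) * J y)
    (x y : X) (jx jy a b : ℝ) (hx : J x = (jx : WithTop ℝ)) (hy : J y = (jy : WithTop ℝ))
    (ha : 0 ≤ a) (hb : 0 ≤ b) (hab : a + b = 1) :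
    J (a • x + b • y) ≤ ((a * jx + b * jy : ℝ) : WithTop ℝ) := by
  have := hconv x y a b ha hb hab
  rw [hx, hy] at this
  exact_mod_cast this

theorem pgn_stat {X Y : Type*} [NormedAddCommGroup X] [InnerProductSpace ℝ X]
    [NormedAddCommGroup Y] [InnerProductSpace ℝ Y]
    (J : X → WithTop ℝ)
    (hconv : ∀ x y : X, ∀ a b : ℝ, 0 ≤ a → 0 ≤ b → a + b = 1 →
      J (a • x + b • y) ≤ (a : WithTop ℝ) * J x + (b : WithTop ℝ) * J y)
    (G : X → Y) (d : Y) (y z : X)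
    (hd : Filter.Tendsto (fun t : ℝ => t⁻¹ • (G (y + t • (z - y)) - G y))
        (nhdsWithin (0:ℝ) {(0:ℝ)}ᶜ) (nhds d))
    (hmin : ∀ᶠ x in nhds y,
      ((2⁻¹ * ‖G y‖ ^ 2 : ℝ) : WithTop ℝ) + J y
        ≤ ((2⁻¹ * ‖G x‖ ^ 2 : ℝ) : WithTop ℝ) + J x)
    (jy jz : ℝ) (hy : J y = (jy : WithTop ℝ)) (hz : J z = (jz : WithTop ℝ)) :
    jy - jz ≤ inner ℝ (G y) d := by
  have hle : nhdsWithin (0:ℝ) (Set.Ioi 0) ≤ nhdsWithin (0:ℝ) {(0:ℝ)}ᶜ :=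
    nhdsWithin_mono _ (fun t ht => ne_of_gt ht)
  have hd' := hd.mono_left hle
  have ht0 : Filter.Tendsto (fun t : ℝ => t) (nhdsWithin (0:ℝ) (Set.Ioi 0)) (nhds 0) :=
    nhdsWithin_le_nhds
  have hlim : Filter.Tendsto (fun t : ℝ =>
      inner ℝ (G y) (t⁻¹ • (G (y + t • (z - y)) - G y))
        + t * (2⁻¹ * ‖t⁻¹ • (G (y + t • (z - y)) - G y)‖ ^ 2))
      (nhdsWithin (0:ℝ) (Set.Ioi 0)) (nhds (inner ℝ (G y) d + 0 * (2⁻¹ * ‖d‖ ^ 2))) :=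
    (tendsto_const_nhds.inner hd').add (ht0.mul ((hd'.norm.pow 2).const_mul _))
  rw [zero_mul, add_zero] at hlim
  refine ge_of_tendsto hlim ?_
  have hline : Filter.Tendsto (fun t : ℝ => y + t • (z - y))
      (nhdsWithin (0:ℝ) (Set.Ioi 0)) (nhds y) := by
    have : Filter.Tendsto (fun t : ℝ => y + t • (z - y))
      (nhdsWithin (0:ℝ) (Set.Ioi 0)) (nhds (y + (0:ℝ) • (z - y))) :=
      tendsto_const_nhds.add (ht0.smul_const _)
    simpa using this
  have h1 : ∀ᶠ t : ℝ in nhdsWithin (0:ℝ) (Set.Ioi 0), t < 1 :=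
    ht0.eventually (gt_mem_nhds one_pos)
  filter_upwards [hline.eventually hmin, h1, self_mem_nhdsWithin] with t hm ht1 htpos
  have htpos : 0 < t := htpos
  have hc := pgn_conv J hconv y z jy jz (1 - t) t hy hz (by linarith) htpos.le (by ring)
  have he : (1 - t) • y + t • z = y + t • (z - y) := by
    rw [sub_smul, smul_sub, one_smul]; abel
  rw [he] at hc
  have hm2 := hm.trans (add_le_add_right hc _)
  rw [hy] at hm2
  have hm3 : 2⁻¹ * ‖G y‖ ^ 2 + jy
      ≤ 2⁻¹ * ‖G (y + t • (z - y))‖ ^ 2 + ((1 - t) * jy + t * jz) := by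
    exact_mod_cast hm2
  set s := t⁻¹ • (G (y + t • (z - y)) - G y) with hs
  have hG : G (y + t • (z - y)) = G y + t • s := by
    rw [hs, smul_smul, mul_inv_cancel₀ htpos.ne', one_smul]; abel
  rw [hG, norm_add_sq_real, inner_smul_right, norm_smul, mul_pow, Real.norm_eq_abs, sq_abs] at hm3
  have : t * (jy - jz) ≤ t * (inner ℝ (G y) s + t * (2⁻¹ * ‖s‖ ^ 2)) := by nlinarith
  exact le_of_mul_le_mul_left this htpos

theorem pgn_exists {X Y : Type*} [NormedAddCommGroup X] [InnerProductSpace ℝ X] [CompleteSpace X]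
    [NormedAddCommGroup Y] [InnerProductSpace ℝ Y]
    (J : X → WithTop ℝ)
    (hconv : ∀ x y : X, ∀ a b : ℝ, 0 ≤ a → 0 ≤ b → a + b = 1 →
      J (a • x + b • y) ≤ (a : WithTop ℝ) * J x + (b : WithTop ℝ) * J y)
    (hlsc : LowerSemicontinuous J)
    (T : X →L[ℝ] Y) (c : Y) (x : X) (b : ℝ) (hb : 0 ≤ b) (hT : ∀ v, ‖v‖ ≤ b * ‖T v‖)
    (k C : ℝ) (hC : 0 ≤ C)
    (hlow : ∀ z jz, J z = ((jz : ℝ) : WithTop ℝ) → k - C * ‖z - x‖ ≤ jz)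
    (w : X) (jw : ℝ) (hw : J w = (jw : WithTop ℝ)) :
    ∃ y, (∃ jy : ℝ, J y = (jy : WithTop ℝ)) ∧
      ∀ z, ((2⁻¹ * ‖c + T (y - x)‖ ^ 2 : ℝ) : WithTop ℝ) + J y
        ≤ ((2⁻¹ * ‖c + T (z - x)‖ ^ 2 : ℝ) : WithTop ℝ) + J z := by
  set φ : X → ℝ := fun z => 2⁻¹ * ‖c + T (z - x)‖ ^ 2 with hφ
  have hφc : Continuous φ := by fun_prop
  set V : Set ℝ := {v | ∃ z jz, J z = ((jz : ℝ) : WithTop ℝ) ∧ v = φ z + jz} with hV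
  have hVne : V.Nonempty := ⟨_, w, jw, hw, rfl⟩
  have hVbdd : BddBelow V := by
    refine ⟨k - C * b * ‖c‖ - 2⁻¹ * (C * b) ^ 2, ?_⟩
    rintro v ⟨z, jz, hz, rfl⟩
    have h1 := hlow z jz hz
    have h2 := hT (z - x)
    have h3 : ‖T (z - x)‖ ≤ ‖c + T (z - x)‖ + ‖c‖ := by
      have := norm_sub_le (c + T (z - x)) c
      simpa using this
    have h4 : ‖z - x‖ ≤ b * (‖c + T (z - x)‖ + ‖c‖) :=
      h2.trans (mul_le_mul_of_nonneg_left h3 hb)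
    have h5 := mul_le_mul_of_nonneg_left h4 hC
    simp only [hφ]
    nlinarith [sq_nonneg (‖c + T (z - x)‖ - C * b)]
  set m := sInf V with hm
  have hmle : ∀ z jz, J z = ((jz : ℝ) : WithTop ℝ) → m ≤ φ z + jz := fun z jz hz =>
    csInf_le hVbdd ⟨z, jz, hz, rfl⟩
  have hseq : ∀ n : ℕ, ∃ z jz, J z = ((jz : ℝ) : WithTop ℝ) ∧ φ z + jz < m + 1 / ((n:ℝ) + 1) := by
    intro n
    obtain ⟨v, ⟨z, jz, hz, rfl⟩, hlt⟩ := exists_lt_of_csInf_lt hVne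
      (show sInf V < m + 1 / ((n:ℝ) + 1) from lt_add_of_pos_right _ Nat.one_div_pos_of_nat)
    exact ⟨z, jz, hz, hlt⟩
  choose zs js hzs hlt using hseq
  have hkey : ∀ n l : ℕ, ‖zs n - zs l‖ ^ 2
      ≤ 4 * b ^ 2 * (1 / ((n:ℝ) + 1) + 1 / ((l:ℝ) + 1)) := by
    intro n l
    have hc := pgn_conv J hconv (zs n) (zs l) _ _ 2⁻¹ 2⁻¹ (hzs n) (hzs l) (by norm_num)
      (by norm_num) (by norm_num)
    obtain ⟨jm, hjm⟩ := WithTop.ne_top_iff_exists.mp (ne_top_of_le_ne_top WithTop.coe_ne_top hc)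
    rw [← hjm] at hc
    have hc' := WithTop.coe_le_coe.mp hc
    have h1 := hmle _ _ hjm.symm
    have h2 := hlt n
    have h3 := hlt l
    set p := c + T (zs n - x) with hp
    set r := c + T (zs l - x) with hr
    have hmid : c + T ((2⁻¹:ℝ) • zs n + (2⁻¹:ℝ) • zs l - x) = (2⁻¹:ℝ) • (p + r) := by
      rw [hp, hr]
      simp only [map_sub, map_add, map_smul]
      module
    have hdiff : T (zs n - zs l) = p - r := by
      rw [hp, hr]; simp only [map_sub]; abel
    have hpar := parallelogram_law_with_norm ℝ p r
    have h4 := hT (zs n - zs l)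
    rw [hdiff] at h4
    simp only [hφ] at h1 h2 h3
    rw [hmid, norm_smul, mul_pow] at h1
    norm_num at h1
    rw [← hp] at h2
    rw [← hr] at h3
    have h5 : ‖p - r‖ ^ 2 ≤ 4 * (1 / ((n:ℝ) + 1) + 1 / ((l:ℝ) + 1)) := by nlinarith
    calc ‖zs n - zs l‖ ^ 2 ≤ (b * ‖p - r‖) ^ 2 := by gcongr
      _ = b ^ 2 * ‖p - r‖ ^ 2 := by ring
      _ ≤ b ^ 2 * (4 * (1 / ((n:ℝ) + 1) + 1 / ((l:ℝ) + 1))) := by gcongr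
      _ = _ := by ring
  have hcau : CauchySeq zs := by
    refine cauchySeq_of_le_tendsto_0 (fun N : ℕ => Real.sqrt (8 * b ^ 2 * (1 / ((N:ℝ) + 1)))) ?_ ?_
    · intro n l N hn hl
      rw [dist_eq_norm]
      refine Real.le_sqrt_of_sq_le ((hkey n l).trans ?_)
      have e1 : 1 / ((n:ℝ) + 1) ≤ 1 / ((N:ℝ) + 1) := Nat.one_div_le_one_div hn
      have e2 : 1 / ((l:ℝ) + 1) ≤ 1 / ((N:ℝ) + 1) := Nat.one_div_le_one_div hl
      nlinarith [sq_nonneg b]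
    · have := ((tendsto_one_div_add_atTop_nhds_zero_nat (𝕜 := ℝ)).const_mul (8 * b ^ 2)).sqrt
      simpa using this
  obtain ⟨y, hy⟩ := cauchySeq_tendsto_of_complete hcau
  have hJy : ∀ ε : ℝ, 0 < ε → J y ≤ ((m - φ y + ε : ℝ) : WithTop ℝ) := by
    intro ε hε
    have hclosed := hlsc.isClosed_preimage ((m - φ y + ε : ℝ) : WithTop ℝ)
    refine hclosed.mem_of_tendsto hy ?_
    have hφy : Filter.Tendsto (fun n => φ (zs n)) Filter.atTop (nhds (φ y)) :=
      (hφc.tendsto y).comp hy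
    have ha := hφy.eventually (lt_mem_nhds (show φ y - ε / 2 < φ y by linarith))
    have hb' := (tendsto_one_div_add_atTop_nhds_zero_nat (𝕜 := ℝ)).eventually
      (gt_mem_nhds (show (0:ℝ) < ε / 2 by linarith))
    filter_upwards [ha, hb'] with n hn1 hn2
    show J (zs n) ≤ _
    rw [hzs n]
    have := hlt n
    exact WithTop.coe_le_coe.mpr (by linarith)
  obtain ⟨jy, hjy⟩ := WithTop.ne_top_iff_exists.mp
    (ne_top_of_le_ne_top WithTop.coe_ne_top (hJy 1 one_pos))
  have hjm : jy ≤ m - φ y := by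
    refine le_of_forall_pos_le_add fun ε hε => ?_
    have := hJy ε hε
    rw [← hjy] at this
    exact WithTop.coe_le_coe.mp this
  refine ⟨y, ⟨jy, hjy.symm⟩, fun z => ?_⟩
  by_cases hz : J z = ⊤
  · rw [hz, WithTop.add_top]; exact le_top
  · obtain ⟨jz, hjz⟩ := WithTop.ne_top_iff_exists.mp hz
    have := hmle z jz hjz.symm
    rw [← hjy, ← hjz]
    have h2 : φ y + jy ≤ φ z + jz := by linarith
    exact_mod_cast h2

theorem pgn_taylor {X Y : Type*} [NormedAddCommGroup X] [InnerProductSpace ℝ X]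
    [NormedAddCommGroup Y] [InnerProductSpace ℝ Y]
    (U : Set X) (F : X → Y) (F' : X → (X →L[ℝ] Y))
    (hdiff : ∀ x ∈ U, ∀ v : X,
      Filter.Tendsto (fun t : ℝ => t⁻¹ • (F (x + t • v) - F x))
        (nhdsWithin (0:ℝ) {(0:ℝ)}ᶜ) (nhds (F' x v)))
    (xs : X)
    (hstar : ∀ x ∈ U, ∀ t ∈ Set.Icc (0:ℝ) 1, xs + t • (x - xs) ∈ U)
    (L : ℝ)
    (hrad : ∀ x ∈ U, ∀ t ∈ Set.Icc (0:ℝ) 1,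
      ‖F' x - F' (xs + t • (x - xs))‖ ≤ (1 - t) * L * ‖x - xs‖)
    (x : X) (hx : x ∈ U) :
    ‖F x - F xs - F' x (x - xs)‖ ≤ L * ‖x - xs‖ ^ 2 / 2 := by
  set v := x - xs with hv
  set g : ℝ → Y := fun t => F (xs + t • v) - F xs - t • F' x v with hg
  have hder : ∀ t ∈ Set.Icc (0:ℝ) 1, HasDerivAt g (F' (xs + t • v) v - F' x v) t := by
    intro t ht
    have h1 : HasDerivAt (fun t : ℝ => F (xs + t • v)) (F' (xs + t • v) v) t := by
      rw [hasDerivAt_iff_tendsto_slope_zero]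
      have := hdiff _ (hstar x hx t ht) v
      refine this.congr fun s => ?_
      rw [add_smul, add_assoc]
    have h2 : HasDerivAt (fun t : ℝ => t • F' x v) ((1:ℝ) • F' x v) t :=
      (hasDerivAt_id t).smul_const _
    rw [one_smul] at h2
    exact (h1.sub_const _).sub h2
  have hB : ∀ t : ℝ, HasDerivAt (fun t : ℝ => L * ‖v‖ ^ 2 * (t - t ^ 2 / 2))
      ((1 - t) * L * ‖v‖ * ‖v‖) t := by
    intro t
    have := ((hasDerivAt_id t).sub (((hasDerivAt_id t).pow 2).div_const 2)).const_mul (L * ‖v‖ ^ 2)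
    refine this.congr_deriv ?_
    simp; ring
  have := image_norm_le_of_norm_deriv_right_le_deriv_boundary (a := (0:ℝ)) (b := 1)
    (f := g) (f' := fun t => F' (xs + t • v) v - F' x v)
    (fun t ht => (hder t ht).continuousAt.continuousWithinAt)
    (fun t ht => (hder t ⟨ht.1, ht.2.le⟩).hasDerivWithinAt)
    (B := fun t : ℝ => L * ‖v‖ ^ 2 * (t - t ^ 2 / 2))
    (B' := fun t => (1 - t) * L * ‖v‖ * ‖v‖)
    (by simp [hg]) hB
    (fun t ht => by
      have h1 := hrad x hx t ⟨ht.1, ht.2.le⟩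
      rw [← sub_apply]
      refine (ContinuousLinearMap.le_opNorm _ _).trans ?_
      rw [norm_sub_rev]
      gcongr)
    (show (1:ℝ) ∈ Set.Icc (0:ℝ) 1 by simp)
  simp only [hg, one_smul] at this
  have he : xs + v = x := by rw [hv]; abel
  rw [he] at this
  refine this.trans (le_of_eq ?_)
  ring

set_option maxHeartbeats 2000000 in
/-- Local convergence of the proximal Gauss–Newton method with CONSTANT RADIUS Lipschitz
average `L`: with `h = ((1+√2)κ + 1)αβ²L < 1`, the function `q` below is continuous and
strictly increasing on `[0, 1/(βL))`, and for
`r̄ = (1/(βL))((2 + κ/2 + (1+√2)αβ²L) − √((2 + κ/2 + (1+√2)αβ²L)² − 2(1−h)))` and every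
`0 < r ≤ r̄` with `B_r(x*) ⊆ U` and every `x₀ ∈ B_r(x*)` the proximal Gauss–Newton
sequence is well-defined, stays in `B_r(x*)`, and satisfies
`‖xₙ − x*‖ ≤ q(‖x₀ − x*‖)ⁿ‖x₀ − x*‖` with `q(‖x₀ − x*‖) < 1`. -/
theorem stmt_18 {X Y : Type*} [NormedAddCommGroup X] [InnerProductSpace ℝ X] [CompleteSpace X]
    [NormedAddCommGroup Y] [InnerProductSpace ℝ Y] [CompleteSpace Y]
    (Ω U : Set X) (hΩopen : IsOpen Ω) (hΩne : Ω.Nonempty)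
    (hUopen : IsOpen U) (hUΩ : U ⊆ Ω)
    (F : X → Y) (F' : X → (X →L[ℝ] Y))
    -- `F` is Gâteaux differentiable on `Ω` with derivative `F'`
    (hdiff : ∀ x ∈ Ω, ∀ v : X,
      Filter.Tendsto (fun t : ℝ => t⁻¹ • (F (x + t • v) - F x))
        (nhdsWithin (0:ℝ) {(0:ℝ)}ᶜ) (nhds (F' x v)))
    -- `J` is proper, convex and lower semicontinuous
    (J : X → WithTop ℝ)
    (hproper : ∃ x, J x ≠ ⊤)
    (hconv : ∀ x y : X, ∀ a b : ℝ, 0 ≤ a → 0 ≤ b → a + b = 1 →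
      J (a • x + b • y) ≤ (a : WithTop ℝ) * J x + (b : WithTop ℝ) * J y)
    (hlsc : LowerSemicontinuous J)
    -- `x* ∈ U` and `U` is star-shaped with respect to `x*`
    (xs : X) (hxsU : xs ∈ U)
    (hstar : ∀ x ∈ U, ∀ t ∈ Set.Icc (0:ℝ) 1, xs + t • (x - xs) ∈ U)
    -- `x*` is a local minimizer of `Φ₀ = ½‖F·‖² + J` with `J(x*) < +∞`
    (hxsJ : J xs ≠ ⊤)
    (hmin : ∀ᶠ x in nhds xs,
      ((2⁻¹ * ‖F xs‖ ^ 2 : ℝ) : WithTop ℝ) + J xs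
        ≤ ((2⁻¹ * ‖F x‖ ^ 2 : ℝ) : WithTop ℝ) + J x)
    -- `F′(x*)` is injective with closed range, `S = (F′(x*)*F′(x*))⁻¹`
    (hinj : Function.Injective (F' xs)) (hcl : IsClosed (Set.range (F' xs)))
    (S : X →L[ℝ] X)
    (hS1 : S ∘L (adjoint (F' xs) ∘L F' xs) = 1)
    (hS2 : (adjoint (F' xs) ∘L F' xs) ∘L S = 1)
    -- `F′` is radius Lipschitz of center `x*` with constant average `L` on `U`
    (L : ℝ) (hLpos : 0 < L)
    (hrad : ∀ x ∈ U, ∀ t ∈ Set.Icc (0:ℝ) 1,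
      ‖F' x - F' (xs + t • (x - xs))‖ ≤ (1 - t) * L * ‖x - xs‖)
    -- the constants `α`, `β`, `κ` and `h`
    (α β κ h : ℝ)
    (hα : α = ‖F xs‖) (hβ : β = ‖S ∘L adjoint (F' xs)‖) (hκ : κ = β * ‖F' xs‖)
    (hh : h = ((1 + Real.sqrt 2) * κ + 1) * α * β ^ 2 * L) (hh1 : h < 1)
    -- the function `q` on `[0, 1/(βL))`
    (q : ℝ → ℝ)
    (hq : ∀ r : ℝ, q r = β / (1 - β * L * r) *
        ((β * L ^ 2 * r ^ 2 + κ * L * r) / (2 * (1 - β * L * r))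
          + (1 + Real.sqrt 2) * α * β ^ 2 * L ^ 2 * r / (1 - β * L * r)
          + ((1 + Real.sqrt 2) * κ + 1) * α * β * L / (1 - β * L * r)))
    -- the explicit radius `r̄`
    (rbar : ℝ)
    (hrbar : rbar = 1 / (β * L) *
        ((2 + κ / 2 + (1 + Real.sqrt 2) * α * β ^ 2 * L)
          - Real.sqrt ((2 + κ / 2 + (1 + Real.sqrt 2) * α * β ^ 2 * L) ^ 2
              - 2 * (1 - h)))) :
    ContinuousOn q (Set.Ico 0 (1 / (β * L))) ∧
    StrictMonoOn q (Set.Ico 0 (1 / (β * L))) ∧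
    (∀ r : ℝ, 0 < r → r ≤ rbar → Metric.ball xs r ⊆ U →
      ∀ x₀ ∈ Metric.ball xs r,
        q ‖x₀ - xs‖ < 1 ∧
        ∃ seq : ℕ → X, seq 0 = x₀ ∧
          (∀ n : ℕ, ∀ z : X,
            ((2⁻¹ * ‖F (seq n) + (F' (seq n)) (seq (n + 1) - seq n)‖ ^ 2 : ℝ) : WithTop ℝ)
                + J (seq (n + 1))
              ≤ ((2⁻¹ * ‖F (seq n) + (F' (seq n)) (z - seq n)‖ ^ 2 : ℝ) : WithTop ℝ) + J z) ∧
          (∀ n : ℕ, seq n ∈ Metric.ball xs r ∧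
            Function.Injective (F' (seq n)) ∧ IsClosed (Set.range (F' (seq n))) ∧
            ‖seq n - xs‖ ≤ q ‖x₀ - xs‖ ^ n * ‖x₀ - xs‖)) := by
  have hs2 : 0 ≤ Real.sqrt 2 := Real.sqrt_nonneg 2
  have hα0 : 0 ≤ α := hα ▸ norm_nonneg _
  have hβ0 : 0 ≤ β := hβ ▸ norm_nonneg _
  have hβb : ∀ v, ‖v‖ ≤ β * ‖F' xs v‖ := by
    intro v
    have h1 : (S ∘L adjoint (F' xs)) (F' xs v) = v := by
      have := congrArg (fun T : X →L[ℝ] X => T v) hS1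
      simpa using this
    calc ‖v‖ = ‖(S ∘L adjoint (F' xs)) (F' xs v)‖ := by rw [h1]
      _ ≤ β * ‖F' xs v‖ := by rw [hβ]; exact le_opNorm _ _
  -- the degenerate case `β = 0`
  rcases hβ0.eq_or_lt with hβz | hβpos
  · rw [← hβz] at hrbar ⊢
    refine ⟨by simp, by simp [StrictMonoOn], fun r hr hr' => ?_⟩
    simp at hrbar
    linarith
  have hκ1 : 1 ≤ κ := by
    have hne : ∃ v : X, v ≠ 0 := by
      by_contra! hcon
      have : S ∘L adjoint (F' xs) = 0 := by
        ext y; exact hcon _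
      rw [this, norm_zero] at hβ
      linarith
    obtain ⟨v, hv⟩ := hne
    have hvpos : 0 < ‖v‖ := norm_pos_iff.mpr hv
    have h1 : 1 * ‖v‖ ≤ κ * ‖v‖ := by
      rw [one_mul, hκ, mul_assoc]
      exact (hβb v).trans (mul_le_mul_of_nonneg_left (le_opNorm _ _) hβ0)
    exact le_of_mul_le_mul_right h1 hvpos
  have hβL : 0 < β * L := mul_pos hβpos hLpos
  set c := (1 + Real.sqrt 2) * α * β ^ 2 * L with hc
  have hc0 : 0 ≤ c := by positivity
  have hh0 : 0 ≤ h := by rw [hh]; positivity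
  -- simplified form of `q`
  have hq' : ∀ r, β * L * r < 1 → q r =
      (((β * L * r) ^ 2 + κ * (β * L * r)) / 2 + c * (β * L * r) + h) / (1 - β * L * r) ^ 2 := by
    intro r hr
    have : 1 - β * L * r ≠ 0 := by linarith
    rw [hq, hc, hh]
    field_simp
  have hlt1 : ∀ r, r < 1 / (β * L) → β * L * r < 1 := by
    intro r hr
    rw [lt_div_iff₀ hβL] at hr
    linarith
  have hnum0 : ∀ u, 0 ≤ u → 0 ≤ (u ^ 2 + κ * u) / 2 + c * u + h := by
    intro u hu; positivity
  have hmono : StrictMonoOn q (Set.Ico 0 (1 / (β * L))) := by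
    intro a ha b hb hab
    have ha1 := hlt1 a ha.2
    have hb1 := hlt1 b hb.2
    rw [hq' a ha1, hq' b hb1]
    have hu0 : 0 ≤ β * L * a := mul_nonneg hβL.le ha.1
    have huv : β * L * a < β * L * b := mul_lt_mul_of_pos_left hab hβL
    generalize β * L * a = u at *
    generalize β * L * b = v at *
    refine div_lt_div₀ ?_ ?_ ?_ ?_
    · have h1 : c * u ≤ c * v := mul_le_mul_of_nonneg_left huv.le hc0
      nlinarith
    · have : 0 ≤ 1 - v := by linarith
      gcongr
    · exact hnum0 v (hu0.trans huv.le)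
    · have : 0 < 1 - v := by linarith
      positivity
  refine ⟨?_, hmono, ?_⟩
  · have : ContinuousOn (fun r => (((β * L * r) ^ 2 + κ * (β * L * r)) / 2 + c * (β * L * r) + h)
        / (1 - β * L * r) ^ 2) (Set.Ico 0 (1 / (β * L))) := by
      refine ContinuousOn.div (by fun_prop) (by fun_prop) ?_
      intro r hr
      have := hlt1 r hr.2
      have : 0 < 1 - β * L * r := by linarith
      positivity
    exact this.congr fun r hr => hq' r (hlt1 r hr.2)
  -- the subgradient inequality at `xs`
  obtain ⟨jxs, hjxs⟩ := WithTop.ne_top_iff_exists.mp hxsJ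
  have hsub : ∀ z jz, J z = ((jz : ℝ) : WithTop ℝ) →
      jxs - jz ≤ inner ℝ (F xs) (F' xs (z - xs)) := fun z jz hz =>
    pgn_stat J hconv F _ xs z (hdiff xs (hUΩ hxsU) _) hmin jxs jz hjxs.symm hz
  -- perturbation of the derivative
  have hpert : ∀ x ∈ U, ‖F' x - F' xs‖ ≤ L * ‖x - xs‖ := by
    intro x hx
    have := hrad x hx 0 (by simp)
    simpa using this
  have hanti : ∀ x ∈ U, β * L * ‖x - xs‖ < 1 →
      ∀ v, ‖v‖ ≤ β / (1 - β * L * ‖x - xs‖) * ‖F' x v‖ := by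
    intro x hx hu v
    have h0 : 0 < 1 - β * L * ‖x - xs‖ := by linarith
    have h1 := hβb v
    have h2 : ‖F' xs v‖ ≤ ‖F' x v‖ + L * ‖x - xs‖ * ‖v‖ := by
      have e : F' xs v = F' x v - (F' x - F' xs) v := by simp
      rw [e]
      refine (norm_sub_le _ _).trans ?_
      gcongr
      exact (le_opNorm _ _).trans (mul_le_mul_of_nonneg_right (hpert x hx) (norm_nonneg _))
    have h3 := mul_le_mul_of_nonneg_left h2 hβ0
    rw [div_mul_eq_mul_div, le_div_iff₀ h0]
    linarith
  -- one step
  have hstep : ∀ x : X, ∃ y : X, x ∈ U → β * L * ‖x - xs‖ < 1 →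
      (∀ z : X, ((2⁻¹ * ‖F x + (F' x) (y - x)‖ ^ 2 : ℝ) : WithTop ℝ) + J y
              ≤ ((2⁻¹ * ‖F x + (F' x) (z - x)‖ ^ 2 : ℝ) : WithTop ℝ) + J z) ∧
      ‖y - xs‖ ≤ q ‖x - xs‖ * ‖x - xs‖ := by
    intro x
    by_cases hx : x ∈ U ∧ β * L * ‖x - xs‖ < 1
    swap
    · exact ⟨x, fun h1 h2 => absurd ⟨h1, h2⟩ hx⟩
    obtain ⟨hxU, hu⟩ := hx
    have h0 : 0 < 1 - β * L * ‖x - xs‖ := by linarith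
    have hant := hanti x hxU hu
    set ρ := ‖x - xs‖ with hρ
    have hρ0 : 0 ≤ ρ := norm_nonneg _
    set b := β / (1 - β * L * ρ) with hb
    have hb0 : 0 ≤ b := by positivity
    obtain ⟨y, ⟨jy, hjy⟩, hymin⟩ := pgn_exists J hconv hlsc (F' x) (F x) x b hb0 hant
      (jxs - ‖F xs‖ * ‖F' xs‖ * ρ) (‖F xs‖ * ‖F' xs‖) (by positivity)
      (by
        intro z jz hz
        have h1 := hsub z jz hz
        have h2 := real_inner_le_norm (F xs) (F' xs (z - xs))
        have h3 : ‖F' xs (z - xs)‖ ≤ ‖F' xs‖ * (‖z - x‖ + ρ) := by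
          refine (le_opNorm _ _).trans ?_
          gcongr
          exact norm_sub_le_norm_sub_add_norm_sub z x xs
        have h4 := mul_le_mul_of_nonneg_left h3 (norm_nonneg (F xs))
        linarith)
      xs jxs hjxs.symm
    refine ⟨y, fun _ _ => ⟨hymin, ?_⟩⟩
    have hst := pgn_stat J hconv (fun z => F x + F' x (z - x)) (F' x (xs - y)) y xs
      (by
        refine tendsto_const_nhds.congr' ?_
        filter_upwards [self_mem_nhdsWithin] with t ht
        have ht : t ≠ 0 := ht
        have e : F x + F' x (y + t • (xs - y) - x) - (F x + F' x (y - x))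
            = t • F' x (xs - y) := by
          simp only [map_sub, map_add, map_smul]; abel
        rw [e, smul_smul, inv_mul_cancel₀ ht, one_smul])
      (Filter.Eventually.of_forall hymin) jy jxs hjy hjxs.symm
    have hs := hsub y jy hjy
    set e := y - xs with he
    have hxse : xs - y = -e := by rw [he]; abel
    have hyx : F' x (y - x) = F' x e - F' x (x - xs) := by
      rw [he, ← map_sub]; congr 1; abel
    simp only [hxse, hyx, map_neg, inner_neg_right] at hst
    -- the main inequality
    have hT := pgn_taylor U F F' (fun x hx => hdiff x (hUΩ hx)) xs hstar L hrad x hxU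
    set w := F x - F xs - F' x (x - xs) with hw
    have hdec : F x + (F' x e - F' x (x - xs)) = w + F xs + F' x e := by
      rw [hw]; abel
    rw [hdec, inner_add_left, inner_add_left, real_inner_self_eq_norm_sq] at hst
    have hA : ‖F' x e‖ ^ 2 ≤ inner ℝ (F xs) (F' xs e) - inner ℝ (F xs) (F' x e)
        - inner ℝ w (F' x e) := by linarith
    have hA1 : inner ℝ (F xs) (F' xs e) - inner ℝ (F xs) (F' x e) ≤ α * (L * ρ * ‖e‖) := by
      rw [← inner_sub_right, hα]
      refine (real_inner_le_norm _ _).trans ?_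
      gcongr
      rw [norm_sub_rev, ← sub_apply]
      exact (le_opNorm _ _).trans (mul_le_mul_of_nonneg_right (hpert x hxU) (norm_nonneg _))
    have hA2 : - inner ℝ w (F' x e) ≤ L * ρ ^ 2 / 2 * ‖F' x e‖ := by
      have h1 := (abs_le.mp (abs_real_inner_le_norm w (F' x e))).1
      have h2 := mul_le_mul_of_nonneg_right hT (norm_nonneg (F' x e))
      linarith
    have hea := hant e
    have hA3 : ‖F' x e‖ ^ 2 ≤ (L * ρ ^ 2 / 2 + α * L * ρ * b) * ‖F' x e‖ := by
      have := mul_le_mul_of_nonneg_left hea (show 0 ≤ α * (L * ρ) by positivity)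
      linarith
    have hA4 : ‖F' x e‖ ≤ L * ρ ^ 2 / 2 + α * L * ρ * b := by
      rcases (norm_nonneg (F' x e)).eq_or_lt with hz | hpos
      · rw [← hz]; positivity
      · rw [sq] at hA3
        exact le_of_mul_le_mul_right hA3 hpos
    refine hea.trans ((mul_le_mul_of_nonneg_left hA4 hb0).trans ?_)
    rw [hq ρ, ← hb, mul_assoc b _ ρ]
    refine mul_le_mul_of_nonneg_left ?_ hb0
    rw [hb]
    have hd : ((β * L ^ 2 * ρ ^ 2 + κ * L * ρ) / (2 * (1 - β * L * ρ))
          + (1 + Real.sqrt 2) * α * β ^ 2 * L ^ 2 * ρ / (1 - β * L * ρ)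
          + ((1 + Real.sqrt 2) * κ + 1) * α * β * L / (1 - β * L * ρ)) * ρ
        = ((β * L ^ 2 * ρ ^ 2 + κ * L * ρ) * ρ / 2
          + (1 + Real.sqrt 2) * α * β ^ 2 * L ^ 2 * ρ * ρ
          + ((1 + Real.sqrt 2) * κ + 1) * α * β * L * ρ) / (1 - β * L * ρ) := by
      field_simp
    have hd2 : L * ρ ^ 2 / 2 + α * L * ρ * (β / (1 - β * L * ρ))
        = (L * ρ ^ 2 / 2 * (1 - β * L * ρ) + α * L * ρ * β) / (1 - β * L * ρ) := by
      rw [eq_div_iff h0.ne', add_mul, mul_assoc (α * L * ρ), div_mul_cancel₀ _ h0.ne']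
    rw [hd, hd2]
    refine div_le_div_of_nonneg_right ?_ h0.le
    have g1 : 0 ≤ (1 + Real.sqrt 2) * α * β ^ 2 * L ^ 2 * ρ * ρ := by positivity
    have g2 : 0 ≤ (1 + Real.sqrt 2) * κ * α * β * L * ρ := by positivity
    have g3 : 0 ≤ (κ - 1) * (L * ρ ^ 2) := mul_nonneg (by linarith) (by positivity)
    have g4 : 0 ≤ β * L ^ 2 * ρ ^ 3 := by positivity
    linarith
  choose next hnext using hstep
  intro r hr hrr hball x₀ hx₀
  -- the radius
  set M := 2 + κ / 2 + c with hM
  have hM2 : 5 / 2 ≤ M := by linarith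
  set s := Real.sqrt (M ^ 2 - 2 * (1 - h)) with hs
  have hs0 : 0 ≤ s := Real.sqrt_nonneg _
  have hssq : s ^ 2 = M ^ 2 - 2 * (1 - h) := Real.sq_sqrt (by nlinarith)
  have hMs : M - s < 1 := by nlinarith
  have hur : β * L * r ≤ M - s := by
    have := mul_le_mul_of_nonneg_left hrr hβL.le
    rw [hrbar, ← mul_assoc, mul_one_div_cancel hβL.ne', one_mul] at this
    exact this
  rw [Metric.mem_ball, dist_eq_norm] at hx₀
  set ρ₀ := ‖x₀ - xs‖ with hρ₀
  have hρ₀0 : 0 ≤ ρ₀ := norm_nonneg _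
  have hu₀ : β * L * ρ₀ < M - s := (mul_lt_mul_of_pos_left hx₀ hβL).trans_le hur
  have hu₀0 : 0 ≤ β * L * ρ₀ := by positivity
  have hu₀1 : β * L * ρ₀ < 1 := hu₀.trans hMs
  have hq1 : q ρ₀ < 1 := by
    rw [hq' ρ₀ hu₀1]
    generalize β * L * ρ₀ = u at hu₀ hu₀0 hu₀1 ⊢
    have : 0 < 1 - u := by linarith
    rw [div_lt_one (by positivity)]
    have h1 : s ^ 2 < (M - u) ^ 2 := by
      have : s < M - u := by linarith
      gcongr
    have hMu : M * u = 2 * u + κ * u / 2 + c * u := by rw [hM]; ring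
    have e1 : (M - u) ^ 2 = M ^ 2 - 2 * (M * u) + u ^ 2 := by ring
    have e2 : (1 - u) ^ 2 = 1 - 2 * u + u ^ 2 := by ring
    rw [e1, hssq, hMu] at h1
    rw [e2]
    linarith
  have hq0 : 0 ≤ q ρ₀ := by
    rw [hq' ρ₀ hu₀1]
    exact div_nonneg (hnum0 _ hu₀0) (sq_nonneg _)
  have hIco : ∀ ρ, 0 ≤ ρ → ρ ≤ ρ₀ → ρ ∈ Set.Ico 0 (1 / (β * L)) := by
    intro ρ h1 h2
    refine ⟨h1, ?_⟩
    rw [lt_div_iff₀ hβL]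
    have := mul_le_mul_of_nonneg_left h2 hβL.le
    linarith
  refine ⟨hq1, fun n => next^[n] x₀, rfl, ?_⟩
  have hinv : ∀ n : ℕ, ‖next^[n] x₀ - xs‖ ≤ q ρ₀ ^ n * ρ₀ ∧ ‖next^[n] x₀ - xs‖ ≤ ρ₀ := by
    have hpow : ∀ n : ℕ, q ρ₀ ^ n * ρ₀ ≤ ρ₀ := fun n =>
      mul_le_of_le_one_left hρ₀0 (pow_le_one₀ hq0 hq1.le)
    have hgood : ∀ n : ℕ, ‖next^[n] x₀ - xs‖ ≤ q ρ₀ ^ n * ρ₀ := by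
      intro n
      induction n with
      | zero => simp [hρ₀]
      | succ n ih =>
        rw [Function.iterate_succ_apply']
        set x := next^[n] x₀ with hxdef
        have hxρ : ‖x - xs‖ ≤ ρ₀ := ih.trans (hpow n)
        have hI := hIco _ (norm_nonneg _) hxρ
        have hxU : x ∈ U := hball (by
          rw [Metric.mem_ball, dist_eq_norm]; exact hxρ.trans_lt hx₀)
        have h1 := (hnext x hxU (hlt1 _ hI.2)).2
        have h2 : q ‖x - xs‖ ≤ q ρ₀ :=
          hmono.monotoneOn hI (hIco ρ₀ hρ₀0 le_rfl) hxρ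
        calc ‖next x - xs‖ ≤ q ‖x - xs‖ * ‖x - xs‖ := h1
          _ ≤ q ρ₀ * (q ρ₀ ^ n * ρ₀) :=
            mul_le_mul h2 ih (norm_nonneg _) hq0
          _ = q ρ₀ ^ (n + 1) * ρ₀ := by ring
    exact fun n => ⟨hgood n, (hgood n).trans (hpow n)⟩
  have hmem : ∀ n : ℕ, next^[n] x₀ ∈ Metric.ball xs r := fun n => by
    rw [Metric.mem_ball, dist_eq_norm]; exact (hinv n).2.trans_lt hx₀
  have hul : ∀ n : ℕ, β * L * ‖next^[n] x₀ - xs‖ < 1 := fun n =>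
    hlt1 _ (hIco _ (norm_nonneg _) (hinv n).2).2
  constructor
  · intro n z
    have := (hnext _ (hball (hmem n)) (hul n)).1 z
    simp only [Function.iterate_succ_apply']
    exact this
  · intro n
    have hant := hanti _ (hball (hmem n)) (hul n)
    have h0 : 0 < 1 - β * L * ‖next^[n] x₀ - xs‖ := by linarith [hul n]
    have hal : AntilipschitzWith (Real.toNNReal (β / (1 - β * L * ‖next^[n] x₀ - xs‖)))
        (F' (next^[n] x₀)) := by
      refine AddMonoidHomClass.antilipschitz_of_bound _ fun v => ?_
      rw [Real.coe_toNNReal _ (by positivity)]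
      exact hant v
    exact ⟨hmem n, hal.injective,
      hal.isClosed_range (F' (next^[n] x₀)).uniformContinuous, (hinv n).1⟩
end
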